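/- arXiv:0808.0739 — 3 statements merged into one kernel-verified Lean document; each statement's English description precedes it below -/
import Mathlib

section
/- For every n ≥ 1 and every 1 ≤ ℓ ≤ n, the simplicial complex |ℓ-SAT-n| of satisfiable ℓ-conjunctive formulas in n variables is homotopy equivalent to Θ(Cube(n, n−ℓ)). -/
/-- A hypergraph on vertex type `V` is given by its set `H` of hyperedges
(subsets of `V`).  The theta complex `Θ(𝓗)` has as simplices the nonempty
finite subsets of `V` that are disjoint from at least one hyperedge. -/
def thetaComplex {V : Type*} (H : Set (Set V)) : Set (Finset V) :=
  {σ : Finset V | σ.Nonempty ∧ ∃ h ∈ H, ∀ v ∈ σ, v ∉ h}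

/-- The geometric realization of a complex `K` of finite subsets of `V`:
convex combinations of vertices supported on a simplex of `K`, topologized as a
subspace of `V → ℝ`. -/
def geomReal {V : Type*} (K : Set (Finset V)) : Set (V → ℝ) :=
  {f | (∀ v, 0 ≤ f v) ∧ ∃ σ ∈ K, (∀ v, f v ≠ 0 → v ∈ σ) ∧ ∑ v ∈ σ, f v = 1}

/-- The hypergraph `Cube(n,k)`: vertices are the vertices `{0,1}^n` of the
`n`-cube, and hyperedges are the vertex sets of the `k`-dimensional faces,
i.e. the subsets obtained by fixing `n - k` of the coordinates. -/
def cubeEdges (n k : ℕ) : Set (Set (Fin n → Bool)) :=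
  {e | ∃ (s : Finset (Fin n)) (g : Fin n → Bool),
    s.card = n - k ∧ e = {f | ∀ i ∈ s, f i = g i}}

/-- A clause in `ℓ`-conjunctive normal form over the variables `x_1, …, x_n`:
a set of `ℓ` literals (pairs of a variable and a polarity) involving `ℓ`
distinct variables. -/
abbrev Clause (n ℓ : ℕ) : Type :=
  {c : Finset (Fin n × Bool) // c.card = ℓ ∧ (c.image Prod.fst).card = ℓ}

/-- A formula in `ℓ`-conjunctive normal form: a conjunction of (distinct)
clauses, with at least one clause. -/
abbrev CNF (n ℓ : ℕ) : Type := {φ : Finset (Clause n ℓ) // φ.Nonempty}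

/-- The truth assignment `τ` satisfies the formula `φ` iff in every clause some
literal evaluates to true. -/
def Satisfies {n ℓ : ℕ} (τ : Fin n → Bool) (φ : CNF n ℓ) : Prop :=
  ∀ c ∈ φ.1, ∃ x ∈ c.1, τ x.1 = x.2

/-- The satisfiable formulas in `ℓ`-conjunctive normal form in `n` variables. -/
abbrev SatCNF (n ℓ : ℕ) : Type := {φ : CNF n ℓ // ∃ τ, Satisfies τ φ}

instance {n ℓ : ℕ} : DecidableEq (SatCNF n ℓ) := Subtype.instDecidableEq

/-- Logical implication of formulas. -/
def Implies {n ℓ : ℕ} (φ ψ : CNF n ℓ) : Prop :=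
  ∀ τ : Fin n → Bool, Satisfies τ φ → Satisfies τ ψ

/-- The simplicial complex `|ℓ-SAT-n|`: vertices are the satisfiable
`ℓ`-conjunctive formulas, and a finite set of such formulas spans a simplex iff
its elements can be arranged in a chain of implications `φ₀ ⇒ φ₁ ⇒ ⋯ ⇒ φ_k`. -/
def satComplex (n ℓ : ℕ) : Set (Finset (SatCNF n ℓ)) :=
  {σ | σ.Nonempty ∧ ∃ l : List (SatCNF n ℓ), l.Nodup ∧ l.toFinset = σ ∧
    l.Chain' (fun φ ψ => Implies φ.1 ψ.1)}

/-! The assignments excluded by a clause form a face of the cube of dimension `n - ℓ`. A nonempty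
set of assignments therefore satisfies some formula exactly when it avoids a hyperedge of
`Cube(n, n - ℓ)`, that is, when it is a simplex of `Θ(Cube(n, n - ℓ))`. Sending such a simplex to
the conjunction of all clauses that hold on it is left adjoint to sending a formula to the set of
all assignments satisfying it, as maps between the face poset of `Θ(Cube(n, n - ℓ))` and the
formulas preordered by implication. The order complex of the formulas is `|ℓ-SAT-n|`, and that of
the face poset is the barycentric subdivision of `Θ(Cube(n, n - ℓ))`. Since comparable monotone maps
induce homotopic maps of order complexes, adjoint monotone maps induce inverse homotopy
equivalences.

The subdivision need only be compared with the complex up to homotopy: an inverse to the barycentric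
map sends a point `y` to a continuous combination of its superlevel sets `{v | r < y v}`, which form
a chain of simplices. -/

open Function

section GeometricRealization

variable {V : Type*} {K : Set (Finset V)}

theorem sum_eq_one_of_mem_geomReal {f : V → ℝ} (hf : f ∈ geomReal K) {σ : Finset V}
    (hσ : support f ⊆ σ) : ∑ v ∈ σ, f v = 1 := by
  obtain ⟨-, τ, -, hτ, hsum⟩ := hf
  rw [← hsum]
  exact Finset.sum_congr_of_eq_on_inter (fun v _ hv => not_imp_comm.1 (hτ v) hv)
    (fun v _ hv => notMem_support.1 fun h => hv (hσ h)) fun _ _ _ => rfl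

theorem mem_geomReal_iff_mem_stdSimplex [Fintype V] {f : V → ℝ} :
    f ∈ geomReal K ↔ f ∈ stdSimplex ℝ V ∧ ∃ σ ∈ K, support f ⊆ σ := by
  constructor
  · intro hf
    obtain ⟨hf₀, σ, hσ, hsupp, -⟩ := id hf
    exact ⟨⟨hf₀, sum_eq_one_of_mem_geomReal hf (by simp)⟩, σ, hσ, hsupp⟩
  · rintro ⟨⟨hf₀, hsum⟩, σ, hσ, hsupp⟩
    refine ⟨hf₀, σ, hσ, hsupp, ?_⟩
    rw [← hsum]
    exact Finset.sum_subset σ.subset_univ fun v _ hv => notMem_support.1 fun h => hv (hsupp h)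

theorem lineMap_mem_geomReal {f g : V → ℝ} (hf : f ∈ geomReal K) (hg : g ∈ geomReal K)
    {σ : Finset V} (hσ : σ ∈ K) (hfσ : support f ⊆ σ) (hgσ : support g ⊆ σ) {t : ℝ}
    (ht : t ∈ Set.Icc 0 1) : AffineMap.lineMap f g t ∈ geomReal K := by
  simp only [AffineMap.lineMap_apply_module]
  refine ⟨fun v => ?_, σ, hσ, fun v hv => ?_, ?_⟩
  · exact add_nonneg (mul_nonneg (sub_nonneg.2 ht.2) (hf.1 v)) (mul_nonneg ht.1 (hg.1 v))
  · by_contra hvσ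
    have hfv : f v = 0 := notMem_support.1 fun h => hvσ (hfσ h)
    have hgv : g v = 0 := notMem_support.1 fun h => hvσ (hgσ h)
    simp [hfv, hgv] at hv
  · simp only [Pi.add_apply, Pi.smul_apply, smul_eq_mul, Finset.sum_add_distrib,
      ← Finset.mul_sum, sum_eq_one_of_mem_geomReal hf hfσ, sum_eq_one_of_mem_geomReal hg hgσ]
    ring

theorem homotopic_of_exists_common_simplex {X : Type*} [TopologicalSpace X]
    (f g : C(X, geomReal K))
    (h : ∀ x, ∃ σ ∈ K, support (f x).1 ⊆ σ ∧ support (g x).1 ⊆ σ) : f.Homotopic g := by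
  refine ⟨{
    toFun p := ⟨AffineMap.lineMap (f p.2).1 (g p.2).1 (p.1 : ℝ), ?_⟩
    continuous_toFun := ?_
    map_zero_left x := by simp
    map_one_left x := by simp }⟩
  · obtain ⟨σ, hσ, hf, hg⟩ := h p.2
    exact lineMap_mem_geomReal (f p.2).2 (g p.2).2 hσ hf hg p.1.2
  · simp only [AffineMap.lineMap_apply_module]
    fun_prop

end GeometricRealization

section OrderComplex

/-- The order complex of a preorder, whose simplices are the nonempty finite chains. For a
complex `K` ordered by inclusion, this is the barycentric subdivision of `K`. -/
def orderComplex (P : Type*) [Preorder P] : Set (Finset P) :=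
  {σ | σ.Nonempty ∧ IsChain (· ≤ ·) (σ : Set P)}

variable {P : Type*} [Preorder P]

theorem mem_geomReal_orderComplex_iff [Fintype P] {x : P → ℝ} :
    x ∈ geomReal (orderComplex P) ↔ x ∈ stdSimplex ℝ P ∧ IsChain (· ≤ ·) (support x) := by
  classical
  rw [mem_geomReal_iff_mem_stdSimplex]
  refine and_congr_right fun hx => ⟨fun ⟨σ, hσ, hxσ⟩ => hσ.2.mono hxσ, fun hchain => ?_⟩
  obtain ⟨p, -, hp⟩ := Finset.exists_ne_zero_of_sum_ne_zero (hx.2 ▸ one_ne_zero)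
  exact ⟨(support x).toFinset, ⟨⟨p, by simpa using hp⟩, by simpa using hchain⟩, by simp⟩

theorem homotopic_of_isChain_support_union [Finite P] {X : Type*} [TopologicalSpace X]
    (f g : C(X, geomReal (orderComplex P)))
    (h : ∀ x, IsChain (· ≤ ·) (support (f x).1 ∪ support (g x).1)) : f.Homotopic g := by
  classical
  cases nonempty_fintype P
  refine homotopic_of_exists_common_simplex f g fun x =>
    ⟨(support (f x).1 ∪ support (g x).1).toFinset, ⟨?_, by simpa using h x⟩, by simp, by simp⟩
  obtain ⟨p, -, hp⟩ := Finset.exists_ne_zero_of_sum_ne_zero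
    ((mem_geomReal_orderComplex_iff.1 (f x).2).1.2 ▸ one_ne_zero)
  exact ⟨p, by simpa using Or.inl hp⟩

end OrderComplex

section Pushforward

variable {X Y : Type*} [Finite Y]

theorem funOnFinite_map_nonneg [Finite X] (f : X → Y) {s : X → ℝ} (hs : 0 ≤ s) :
    0 ≤ FunOnFinite.map f s := by
  classical
  cases nonempty_fintype X
  intro y
  rw [FunOnFinite.map_apply_apply]
  exact Finset.sum_nonneg fun x _ => hs x

theorem sum_funOnFinite_map [Fintype X] [Fintype Y] (f : X → Y) (s : X → ℝ) :
    ∑ y, FunOnFinite.map f s y = ∑ x, s x := by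
  classical
  simp only [FunOnFinite.map_apply_apply]
  exact Finset.sum_fiberwise _ f s

theorem support_funOnFinite_map_subset [Finite X] (f : X → Y) (s : X → ℝ) :
    support (FunOnFinite.map f s) ⊆ f '' support s := by
  classical
  cases nonempty_fintype X
  intro y hy
  rw [mem_support, FunOnFinite.map_apply_apply] at hy
  obtain ⟨x, hx, hsx⟩ := Finset.exists_ne_zero_of_sum_ne_zero hy
  exact ⟨x, hsx, (Finset.mem_filter.1 hx).2⟩

end Pushforward

section Truncation

variable {P : Type*} [Preorder P] [Fintype P] {x : P → ℝ} {s : ℝ} {p q : P}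

open Classical in
/-- The total weight of the elements strictly below `p`. When the support of `x` is a chain of a
partial order, the intervals `[massBelow x p, massBelow x p + x p]` subdivide `[0, ∑ q, x q]`. -/
noncomputable def massBelow (x : P → ℝ) (p : P) : ℝ :=
  ∑ q with q < p, x q

theorem massBelow_nonneg (hx : 0 ≤ x) (p : P) : 0 ≤ massBelow x p :=
  Finset.sum_nonneg fun q _ => hx q

theorem massBelow_add_le_massBelow (hx : 0 ≤ x) (h : p < q) :
    massBelow x p + x p ≤ massBelow x q := by
  classical
  rw [massBelow, add_comm, ← Finset.sum_insert (by simp)]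
  refine Finset.sum_le_sum_of_subset_of_nonneg ?_ fun r _ _ => hx r
  simpa [Finset.insert_subset_iff, h] using Finset.monotone_filter_right _ fun r _ hr => hr.trans h

theorem massBelow_add_le_sum (hx : 0 ≤ x) (p : P) : massBelow x p + x p ≤ ∑ q, x q := by
  classical
  rw [massBelow, add_comm, ← Finset.sum_insert (by simp)]
  exact Finset.sum_le_sum_of_subset_of_nonneg (Finset.subset_univ _) fun r _ _ => hx r

/-- The part of the weight `x` carried by `[0, s]`: at `p`, the length of
`[massBelow x p, massBelow x p + x p] ∩ [0, s]`. -/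
noncomputable def truncate (s : ℝ) (x : P → ℝ) (p : P) : ℝ :=
  min s (massBelow x p + x p) - min s (massBelow x p)

theorem continuous_truncate : Continuous fun z : ℝ × (P → ℝ) => truncate z.1 z.2 := by
  unfold truncate massBelow
  fun_prop

theorem truncate_nonneg (hx : 0 ≤ x) : 0 ≤ truncate s x := fun p =>
  sub_nonneg.2 (min_le_min_left s (le_add_of_nonneg_right (hx p)))

theorem truncate_le (hx : 0 ≤ x) : truncate s x ≤ x := by
  intro p
  have := hx p
  simp only [truncate, Pi.zero_apply] at this ⊢
  grind

theorem truncate_zero (hx : 0 ≤ x) : truncate 0 x = 0 := by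
  funext p
  rw [truncate, min_eq_left (massBelow_nonneg hx p),
    min_eq_left (add_nonneg (massBelow_nonneg hx p) (hx p)), sub_self, Pi.zero_apply]

theorem truncate_one (hx : x ∈ stdSimplex ℝ P) : truncate 1 x = x := by
  funext p
  have hle : massBelow x p + x p ≤ 1 := hx.2 ▸ massBelow_add_le_sum hx.1 p
  rw [truncate, min_eq_right hle, min_eq_right (by linarith [hx.1 p]), add_sub_cancel_left]

theorem massBelow_lt_of_truncate_ne_zero (hx : 0 ≤ x) (hp : truncate s x p ≠ 0) :
    massBelow x p < s := by
  contrapose! hp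
  rw [truncate, min_eq_left hp, min_eq_left (hp.trans (le_add_of_nonneg_right (hx p))), sub_self]

theorem lt_massBelow_add_of_truncate_ne (hx : 0 ≤ x) (hp : truncate s x p ≠ x p) :
    s < massBelow x p + x p := by
  contrapose! hp
  rw [truncate, min_eq_right hp, min_eq_right (by linarith [show 0 ≤ x p from hx p]),
    add_sub_cancel_left]

theorem support_truncate_subset (hx : 0 ≤ x) : support (truncate s x) ⊆ support x :=
  fun p hp hxp => hp (le_antisymm (hxp ▸ truncate_le hx p) (truncate_nonneg hx p))

theorem support_sub_truncate_subset (hx : 0 ≤ x) : support (x - truncate s x) ⊆ support x :=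
  (support_sub _ _).trans (Set.union_subset subset_rfl (support_truncate_subset hx))

theorem le_of_mem_support_truncate (hx : 0 ≤ x) (hchain : IsChain (· ≤ ·) (support x))
    (hp : p ∈ support (truncate s x)) (hq : q ∈ support (x - truncate s x)) : p ≤ q := by
  by_contra hpq
  have hqp : q < p := lt_of_le_not_ge ((hchain.total (support_truncate_subset hx hp)
    (support_sub_truncate_subset hx hq)).resolve_left hpq) hpq
  exact lt_irrefl s <| calc
    s < massBelow x q + x q := lt_massBelow_add_of_truncate_ne hx (sub_ne_zero.1 hq).symm
    _ ≤ massBelow x p := massBelow_add_le_massBelow hx hqp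
    _ < s := massBelow_lt_of_truncate_ne_zero hx hp

end Truncation

section OrderComplexMap

variable {P Q R : Type*} [Preorder P] [Preorder Q] [Finite P] [Finite Q]

theorem map_mem_geomReal_orderComplex (f : P →o Q) {x : P → ℝ}
    (hx : x ∈ geomReal (orderComplex P)) :
    FunOnFinite.map f x ∈ geomReal (orderComplex Q) := by
  cases nonempty_fintype P
  cases nonempty_fintype Q
  rw [mem_geomReal_orderComplex_iff] at hx ⊢
  exact ⟨⟨funOnFinite_map_nonneg f hx.1.1, (sum_funOnFinite_map f x).trans hx.1.2⟩,
    (f.monotone.isChain_image hx.2).mono (support_funOnFinite_map_subset f x)⟩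

/-- The simplicial map of order complexes induced by a monotone map. -/
noncomputable def orderComplexMap (f : P →o Q) :
    C(geomReal (orderComplex P), geomReal (orderComplex Q)) where
  toFun x := ⟨FunOnFinite.map f x.1, map_mem_geomReal_orderComplex f x.2⟩
  continuous_toFun := ((FunOnFinite.continuous_map ℝ f).comp continuous_subtype_val).subtype_mk _

theorem orderComplexMap_id :
    orderComplexMap (OrderHom.id : P →o P) = ContinuousMap.id _ := by
  ext x : 2
  exact congrFun (FunOnFinite.map_id ℝ) x.1

theorem orderComplexMap_comp [Preorder R] [Finite R] (g : Q →o R) (f : P →o Q) :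
    orderComplexMap (g.comp f) = (orderComplexMap g).comp (orderComplexMap f) := by
  ext x : 2
  exact congrFun (FunOnFinite.map_comp g f) x.1

theorem map_truncate_add_map_mem_geomReal [Fintype P] {f g : P →o Q} (hfg : f ≤ g) {x : P → ℝ}
    (hx : x ∈ geomReal (orderComplex P)) (s : ℝ) :
    FunOnFinite.map f (truncate s x) + FunOnFinite.map g (x - truncate s x) ∈
      geomReal (orderComplex Q) := by
  cases nonempty_fintype Q
  rw [mem_geomReal_orderComplex_iff] at hx ⊢
  obtain ⟨⟨hx₀, hsum⟩, hchain⟩ := hx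
  have hle : truncate s x ≤ x := truncate_le hx₀
  refine ⟨⟨add_nonneg (funOnFinite_map_nonneg f (truncate_nonneg hx₀))
    (funOnFinite_map_nonneg g (sub_nonneg.2 hle)), ?_⟩, ?_⟩
  · simp only [Pi.add_apply, Finset.sum_add_distrib, sum_funOnFinite_map, Pi.sub_apply,
      Finset.sum_sub_distrib, add_sub_cancel, hsum]
  · refine IsChain.mono ((support_add _ _).trans
      (Set.union_subset_union (support_funOnFinite_map_subset f _)
        (support_funOnFinite_map_subset g _))) ?_
    refine isChain_union.2 ⟨f.monotone.isChain_image (hchain.mono (support_truncate_subset hx₀)),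
      g.monotone.isChain_image (hchain.mono (support_sub_truncate_subset hx₀)), ?_⟩
    rintro _ ⟨p, hp, rfl⟩ _ ⟨q, hq, rfl⟩ -
    exact .inl ((f.monotone (le_of_mem_support_truncate hx₀ hchain hp hq)).trans (hfg q))

/-- At time `s` the part of the mass in `[0, s]` is moved along `f` and the rest along `g`, which is
the prism triangulation of `|P| × [0, 1]` written out in coordinates. -/
theorem orderComplexMap_homotopic_of_le {f g : P →o Q} (hfg : f ≤ g) :
    (orderComplexMap f).Homotopic (orderComplexMap g) := by
  cases nonempty_fintype P
  refine .symm ⟨{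
    toFun z := ⟨_, map_truncate_add_map_mem_geomReal hfg z.2.2 z.1⟩
    continuous_toFun := ?_
    map_zero_left x := ?_
    map_one_left x := ?_ }⟩
  · have htrunc : Continuous fun z : unitInterval × geomReal (orderComplex P) =>
        truncate z.1.1 z.2.1 :=
      continuous_truncate.comp (continuous_subtype_val.prodMap continuous_subtype_val)
    have hrest : Continuous fun z : unitInterval × geomReal (orderComplex P) =>
        z.2.1 - truncate z.1.1 z.2.1 := by fun_prop
    exact (((FunOnFinite.continuous_map ℝ f).comp htrunc).add
      ((FunOnFinite.continuous_map ℝ g).comp hrest)).subtype_mk _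
  · have htrunc : truncate 0 x.1 = 0 := truncate_zero x.2.1
    have hmap : FunOnFinite.map f (0 : P → ℝ) = 0 := map_zero (FunOnFinite.linearMap ℝ ℝ f)
    ext : 1
    simp [htrunc, hmap, orderComplexMap]
  · have htrunc : truncate 1 x.1 = x.1 :=
      truncate_one (mem_geomReal_orderComplex_iff.1 x.2).1
    have hmap : FunOnFinite.map g (0 : P → ℝ) = 0 := map_zero (FunOnFinite.linearMap ℝ ℝ g)
    ext : 1
    simp [htrunc, hmap, orderComplexMap]

theorem nonempty_homotopyEquiv_orderComplex_of_galoisConnection {l : P → Q} {u : Q → P}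
    (gc : GaloisConnection l u) :
    Nonempty (ContinuousMap.HomotopyEquiv
      (geomReal (orderComplex P)) (geomReal (orderComplex Q))) := by
  let lHom : P →o Q := ⟨l, gc.monotone_l⟩
  let uHom : Q →o P := ⟨u, gc.monotone_u⟩
  refine ⟨⟨orderComplexMap lHom, orderComplexMap uHom, ?_, ?_⟩⟩
  · rw [← orderComplexMap_comp, ← orderComplexMap_id]
    exact (orderComplexMap_homotopic_of_le (f := .id) gc.le_u_l).symm
  · rw [← orderComplexMap_comp, ← orderComplexMap_id]
    exact orderComplexMap_homotopic_of_le (g := .id) gc.l_u_le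

end OrderComplexMap

section Barycenter

variable {V : Type*} {K : Set (Finset V)} [Fintype K] {x : K → ℝ} {v : V}

/-- The piecewise linear map sending the vertex `σ` of the barycentric subdivision of `K` to the
barycenter of `σ`. -/
noncomputable def barycentricSum (x : K → ℝ) : V → ℝ :=
  ∑ σ : K, x σ • (σ : Finset V).centroidWeightsIndicator ℝ

theorem barycentricSum_apply (x : K → ℝ) (v : V) :
    barycentricSum x v = ∑ σ : K, x σ * (σ : Finset V).centroidWeightsIndicator ℝ v := by
  simp [barycentricSum]

theorem centroidWeightsIndicator_nonneg (σ : Finset V) : 0 ≤ σ.centroidWeightsIndicator ℝ :=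
  Set.indicator_nonneg fun _ _ => by simp

theorem exists_mem_of_barycentricSum_ne_zero (hv : barycentricSum x v ≠ 0) :
    ∃ σ ∈ support x, v ∈ σ.1 := by
  rw [barycentricSum_apply] at hv
  obtain ⟨σ, -, hσ⟩ := Finset.exists_ne_zero_of_sum_ne_zero hv
  exact ⟨σ, left_ne_zero_of_mul hσ, Set.mem_of_indicator_ne_zero (right_ne_zero_of_mul hσ)⟩

theorem barycentricSum_le_barycentricSum (hx : 0 ≤ x) (hchain : IsChain (· ≤ ·) (support x))
    {σ : K} (hσ : σ ∈ support x) {w : V} (hv : v ∉ σ.1) (hw : w ∈ σ.1) :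
    barycentricSum x v ≤ barycentricSum x w := by
  simp only [barycentricSum_apply]
  refine Finset.sum_le_sum fun τ _ => ?_
  by_cases hτ : x τ = 0
  · simp [hτ]
  refine mul_le_mul_of_nonneg_left ?_ (hx τ)
  rcases hchain.total hτ hσ with hle | hle
  · rw [Finset.centroidWeightsIndicator_def, Set.indicator_of_notMem fun h => hv (hle h)]
    exact centroidWeightsIndicator_nonneg τ.1 w
  · rw [Finset.centroidWeightsIndicator_def, Set.indicator_of_mem (hle hw)]
    exact Set.indicator_le_self' (by simp) v

theorem continuous_barycentricSum :
    Continuous (barycentricSum : (K → ℝ) → V → ℝ) := by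
  unfold barycentricSum
  fun_prop

theorem barycentricSum_mem_stdSimplex [Fintype V] (hK : IsRelLowerSet K Finset.Nonempty)
    (hx : x ∈ stdSimplex ℝ K) : barycentricSum x ∈ stdSimplex ℝ V :=
  (convex_stdSimplex ℝ V).sum_mem (fun σ _ => hx.1 σ) hx.2 fun σ _ =>
    ⟨centroidWeightsIndicator_nonneg σ.1,
      σ.1.sum_centroidWeightsIndicator_eq_one_of_nonempty ℝ (hK.prop_of_mem σ.2)⟩

variable [Finite V]

theorem barycentricSum_mem_geomReal (hK : IsRelLowerSet K Finset.Nonempty)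
    (hx : x ∈ geomReal (orderComplex K)) : barycentricSum x ∈ geomReal K := by
  cases nonempty_fintype V
  obtain ⟨-, σ, ⟨hσ, hchain⟩, hxσ, -⟩ := id hx
  obtain ⟨τ, hτ, hmax⟩ := σ.exists_maximal hσ
  refine mem_geomReal_iff_mem_stdSimplex.2 ⟨barycentricSum_mem_stdSimplex hK
    (mem_geomReal_orderComplex_iff.1 hx).1, τ, τ.2, fun v hv => ?_⟩
  obtain ⟨ρ, hρ, hvρ⟩ := exists_mem_of_barycentricSum_ne_zero hv
  have hle : ρ ≤ τ := (hchain.total (hxσ ρ hρ) hτ).elim id fun h => hmax (hxσ ρ hρ) h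
  exact hle hvρ

/-- `barycentricSum` as a map from the barycentric subdivision of `K` to `K`. -/
noncomputable def barycentricMap (hK : IsRelLowerSet K Finset.Nonempty) :
    C(geomReal (orderComplex K), geomReal K) where
  toFun x := ⟨barycentricSum x.1, barycentricSum_mem_geomReal hK x.2⟩
  continuous_toFun := (continuous_barycentricSum.comp continuous_subtype_val).subtype_mk _

end Barycenter

section SuperlevelSet

variable {V : Type*} {y : V → ℝ} {A B : Finset V}

/-- For finite `V`, this says that `A = {v | r < y v}` for some `r ≥ 0`. -/
def IsSuperlevelSet (y : V → ℝ) (A : Finset V) : Prop :=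
  (∀ a ∈ A, 0 < y a) ∧ ∀ a ∈ A, ∀ b ∉ A, y b < y a

theorem IsSuperlevelSet.subset_or_subset (hA : IsSuperlevelSet y A) (hB : IsSuperlevelSet y B) :
    A ⊆ B ∨ B ⊆ A := by
  by_contra! h
  obtain ⟨a, haA, haB⟩ := Finset.not_subset.1 h.1
  obtain ⟨b, hbB, hbA⟩ := Finset.not_subset.1 h.2
  exact lt_asymm (hA.2 a haA b hbA) (hB.2 b hbB a haB)

theorem exists_isSuperlevelSet_of_mem_geomReal {K : Set (Finset V)}
    (hK : IsRelLowerSet K Finset.Nonempty) (hy : y ∈ geomReal K) :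
    ∃ A : K, IsSuperlevelSet y A := by
  classical
  obtain ⟨hy₀, σ, hσ, hyσ, hsum⟩ := hy
  obtain ⟨v, hvσ, hv⟩ := Finset.exists_ne_zero_of_sum_ne_zero (hsum ▸ one_ne_zero)
  have hpos {a} (ha : a ∈ {a ∈ σ | y a ≠ 0}) : 0 < y a :=
    (hy₀ a).lt_of_ne' (Finset.mem_filter.1 ha).2
  refine ⟨⟨{a ∈ σ | y a ≠ 0}, hK.mem_of_le hσ (Finset.filter_subset _ _) ⟨v, by simp [hvσ, hv]⟩⟩,
    fun a => hpos, fun a ha b hb => ?_⟩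
  have hb₀ : y b = 0 := by
    by_contra h
    exact hb (Finset.mem_filter.2 ⟨hyσ b h, h⟩)
  exact hb₀ ▸ hpos ha

variable [Fintype V] [DecidableEq V]

/-- A nonnegative continuous function of `y`, nonzero exactly when `A` is a superlevel set
of `y`. -/
noncomputable def levelWeight (y : V → ℝ) (A : Finset V) : ℝ :=
  ∏ a ∈ A, max (y a) 0 * ∏ b ∈ Aᶜ, max (y a - y b) 0

theorem continuous_levelWeight (A : Finset V) :
    Continuous fun y : V → ℝ => levelWeight y A := by
  unfold levelWeight
  fun_prop

theorem levelWeight_nonneg (y : V → ℝ) (A : Finset V) : 0 ≤ levelWeight y A :=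
  Finset.prod_nonneg fun _ _ => by positivity

theorem levelWeight_ne_zero_iff : levelWeight y A ≠ 0 ↔ IsSuperlevelSet y A := by
  simp only [levelWeight, IsSuperlevelSet, Finset.prod_ne_zero_iff, mul_ne_zero_iff, ne_eq,
    max_eq_right_iff, not_le, Finset.mem_compl, sub_pos, ← forall_and]

end SuperlevelSet

section BarycentricSubdivision

variable {V : Type*} {K : Set (Finset V)} [Fintype K] {x : K → ℝ} {y : V → ℝ} {A B : K}

theorem le_or_le_of_isSuperlevelSet_barycentricSum (hx : 0 ≤ x)
    (hchain : IsChain (· ≤ ·) (support x)) (hA : IsSuperlevelSet (barycentricSum x) A.1)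
    (hB : B ∈ support x) : A ≤ B ∨ B ≤ A := by
  by_contra! h
  obtain ⟨a, haA, haB⟩ := Finset.not_subset.1 h.1
  obtain ⟨b, hbB, hbA⟩ := Finset.not_subset.1 h.2
  exact (hA.2 a haA b hbA).not_ge (barycentricSum_le_barycentricSum hx hchain hB haB hbB)

variable [Fintype V] [DecidableEq V]

/-- The weights `levelWeight y`, restricted to the simplices of `K` and normalized. -/
noncomputable def normalizedLevelWeight (y : V → ℝ) (A : K) : ℝ :=
  levelWeight y A / ∑ B : K, levelWeight y B

theorem sum_levelWeight_pos (hK : IsRelLowerSet K Finset.Nonempty) (hy : y ∈ geomReal K) :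
    0 < ∑ A : K, levelWeight y A := by
  obtain ⟨A, hA⟩ := exists_isSuperlevelSet_of_mem_geomReal hK hy
  exact Finset.sum_pos' (fun B _ => levelWeight_nonneg y B)
    ⟨A, Finset.mem_univ A, (levelWeight_nonneg y A).lt_of_ne' (levelWeight_ne_zero_iff.2 hA)⟩

theorem isSuperlevelSet_of_normalizedLevelWeight_ne_zero (hA : normalizedLevelWeight y A ≠ 0) :
    IsSuperlevelSet y A :=
  levelWeight_ne_zero_iff.1 (div_ne_zero_iff.1 hA).1

theorem normalizedLevelWeight_mem_geomReal (hK : IsRelLowerSet K Finset.Nonempty)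
    (hy : y ∈ geomReal K) : normalizedLevelWeight y ∈ geomReal (orderComplex K) := by
  refine mem_geomReal_orderComplex_iff.2 ⟨⟨fun A => ?_, ?_⟩, fun A hA B hB _ => ?_⟩
  · exact div_nonneg (levelWeight_nonneg y A) (sum_levelWeight_pos hK hy).le
  · simp only [normalizedLevelWeight, ← Finset.sum_div, div_self (sum_levelWeight_pos hK hy).ne']
  · exact (isSuperlevelSet_of_normalizedLevelWeight_ne_zero hA).subset_or_subset
      (isSuperlevelSet_of_normalizedLevelWeight_ne_zero hB)

/-- `normalizedLevelWeight` as a map from `K` to its barycentric subdivision, homotopy inverse to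
`barycentricMap`. -/
noncomputable def levelMap (hK : IsRelLowerSet K Finset.Nonempty) :
    C(geomReal K, geomReal (orderComplex K)) where
  toFun y := ⟨normalizedLevelWeight y.1, normalizedLevelWeight_mem_geomReal hK y.2⟩
  continuous_toFun := by
    have hcont (A : K) : Continuous fun y : geomReal K => levelWeight y.1 A :=
      (continuous_levelWeight A.1).comp continuous_subtype_val
    exact (continuous_pi fun A => (hcont A).div (continuous_finsetSum _ fun B _ => hcont B)
      fun y => (sum_levelWeight_pos hK y.2).ne').subtype_mk _

theorem levelMap_comp_barycentricMap_homotopic_id (hK : IsRelLowerSet K Finset.Nonempty) :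
    ((levelMap hK).comp (barycentricMap hK)).Homotopic (.id _) := by
  refine homotopic_of_isChain_support_union _ _ fun x => isChain_union.2 ⟨?_, ?_, ?_⟩
  · exact (mem_geomReal_orderComplex_iff.1 (levelMap hK (barycentricMap hK x)).2).2
  · exact (mem_geomReal_orderComplex_iff.1 x.2).2
  · intro A hA B hB _
    exact le_or_le_of_isSuperlevelSet_barycentricSum x.2.1
      (mem_geomReal_orderComplex_iff.1 x.2).2
      (isSuperlevelSet_of_normalizedLevelWeight_ne_zero hA) hB

theorem barycentricMap_comp_levelMap_homotopic_id (hK : IsRelLowerSet K Finset.Nonempty) :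
    ((barycentricMap hK).comp (levelMap hK)).Homotopic (.id _) := by
  refine homotopic_of_exists_common_simplex _ _ fun y => ?_
  obtain ⟨σ, hσ, hyσ⟩ := (mem_geomReal_iff_mem_stdSimplex.1 y.2).2
  refine ⟨σ, hσ, fun v hv => ?_, hyσ⟩
  obtain ⟨A, hA, hvA⟩ := exists_mem_of_barycentricSum_ne_zero hv
  exact hyσ ((isSuperlevelSet_of_normalizedLevelWeight_ne_zero hA).1 v hvA).ne'

end BarycentricSubdivision

theorem nonempty_homotopyEquiv_barycentricSubdivision {V : Type*} [Finite V]
    {K : Set (Finset V)} (hK : IsRelLowerSet K Finset.Nonempty) :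
    Nonempty (ContinuousMap.HomotopyEquiv (geomReal (orderComplex K)) (geomReal K)) := by
  classical
  cases nonempty_fintype V
  have := Fintype.ofFinite K
  exact ⟨⟨barycentricMap hK, levelMap hK, levelMap_comp_barycentricMap_homotopic_id hK,
    barycentricMap_comp_levelMap_homotopic_id hK⟩⟩

theorem isChain_coe_iff_exists_list_isChain {P : Type*} [Preorder P] [DecidableEq P]
    {σ : Finset P} : IsChain (· ≤ ·) (σ : Set P) ↔
      ∃ l : List P, l.Nodup ∧ l.toFinset = σ ∧ l.IsChain (· ≤ ·) := by
  classical
  constructor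
  · intro hσ
    have : Std.Total fun p q : σ => p ≤ q := ⟨fun p q => hσ.total p.2 q.2⟩
    let l : List σ := σ.attach.toList.insertionSort (· ≤ ·)
    have hperm : l.Perm σ.attach.toList := List.perm_insertionSort _ _
    have hnodup : l.Nodup := hperm.nodup_iff.2 (Finset.nodup_toList _)
    refine ⟨l.map Subtype.val, hnodup.map Subtype.val_injective, ?_, ?_⟩
    · ext p
      simp [hperm.mem_iff]
    · rw [List.isChain_iff_pairwise, List.pairwise_map]
      exact List.pairwise_insertionSort _ _
  · rintro ⟨l, hnodup, rfl, hl⟩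
    have : Std.Symm fun p q : P => p ≤ q ∨ q ≤ p := ⟨fun _ _ => Or.symm⟩
    exact (List.pairwise_iff_coe_toFinset_pairwise hnodup).2
      ((List.isChain_iff_pairwise.1 hl).imp Or.inl)

theorem isRelLowerSet_thetaComplex {V : Type*} (H : Set (Set V)) :
    IsRelLowerSet (thetaComplex H) Finset.Nonempty := by
  rintro σ ⟨hσ, h, hH, hdisj⟩
  exact ⟨hσ, fun τ hτσ hτ => ⟨hτ, h, hH, fun v hv => hdisj v (hτσ hv)⟩⟩

section Satisfiability

variable {n ℓ : ℕ}

/-- The face of the cube consisting of the assignments that make every literal of `c` false. -/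
def falsifyingFace (c : Clause n ℓ) : Set (Fin n → Bool) :=
  {τ | ∀ x ∈ c.1, τ x.1 ≠ x.2}

theorem satisfies_iff_forall_notMem_falsifyingFace {τ : Fin n → Bool} {φ : CNF n ℓ} :
    Satisfies τ φ ↔ ∀ c ∈ φ.1, τ ∉ falsifyingFace c := by
  simp only [Satisfies, falsifyingFace, Set.mem_ofPred_eq, not_forall, exists_prop, ne_eq, not_not]

theorem range_falsifyingFace (hℓn : ℓ ≤ n) :
    Set.range (falsifyingFace : Clause n ℓ → Set (Fin n → Bool)) = cubeEdges n (n - ℓ) := by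
  have hcodim : n - (n - ℓ) = ℓ := Nat.sub_sub_self hℓn
  ext e
  constructor
  · rintro ⟨⟨c, hcard, hvars⟩, rfl⟩
    have hinj : Set.InjOn Prod.fst (c : Set (Fin n × Bool)) :=
      Finset.card_image_iff.1 (hvars.trans hcard.symm)
    choose! g hg using fun i (hi : i ∈ c.image Prod.fst) => Finset.mem_image.1 hi
    refine ⟨c.image Prod.fst, fun i => !(g i).2, hvars.trans hcodim.symm, ?_⟩
    ext τ
    simp only [falsifyingFace, Set.mem_ofPred_eq, Finset.forall_mem_image]
    refine forall₂_congr fun x hx => ?_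
    obtain ⟨hmem, hfst⟩ := hg x.1 (Finset.mem_image_of_mem _ hx)
    rw [hinj hmem hx hfst, ← Bool.eq_not]
  · rintro ⟨s, g, hs, rfl⟩
    let literal (i : Fin n) : Fin n × Bool := (i, !g i)
    have hinj : Injective literal := fun i j h => congrArg Prod.fst h
    have hvars : (s.image literal).image Prod.fst = s := by
      simp [Finset.image_image, literal, comp_def]
    refine ⟨⟨s.image literal, ?_, ?_⟩, ?_⟩
    · rw [Finset.card_image_of_injective _ hinj, hs, hcodim]
    · rw [hvars, hs, hcodim]
    · ext τ
      simp [falsifyingFace, literal]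

/-- The satisfiable formulas ordered by logical implication. The synonym keeps this preorder apart
from the inclusion order that `SatCNF` inherits as a subtype of a type of finsets. -/
def ImplicationOrder (n ℓ : ℕ) : Type := SatCNF n ℓ

namespace ImplicationOrder

instance : Preorder (ImplicationOrder n ℓ) where
  le φ ψ := Implies φ.1 ψ.1
  le_refl _ _ := id
  le_trans _ _ _ h₁ h₂ τ := h₂ τ ∘ h₁ τ

instance : Finite (ImplicationOrder n ℓ) := inferInstanceAs (Finite (SatCNF n ℓ))

instance : DecidableEq (ImplicationOrder n ℓ) := inferInstanceAs (DecidableEq (SatCNF n ℓ))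

end ImplicationOrder

theorem satComplex_eq_orderComplex (n ℓ : ℕ) :
    satComplex n ℓ = orderComplex (ImplicationOrder n ℓ) :=
  Set.ext fun _ => and_congr_right fun _ =>
    (isChain_coe_iff_exists_list_isChain (P := ImplicationOrder n ℓ)).symm

/-- The theta complex of the hypergraph of falsifying faces, presented by clauses. -/
abbrev clauseComplex (n ℓ : ℕ) : Set (Finset (Fin n → Bool)) :=
  thetaComplex (Set.range (falsifyingFace : Clause n ℓ → Set (Fin n → Bool)))

open Classical in
/-- The simplex of all assignments satisfying a formula. -/
noncomputable def models (φ : ImplicationOrder n ℓ) : clauseComplex n ℓ :=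
  ⟨({τ | Satisfies τ φ.1} : Finset (Fin n → Bool)), by
    obtain ⟨τ, hτ⟩ := φ.2
    obtain ⟨c, hc⟩ := φ.1.2
    exact ⟨⟨τ, by simpa using hτ⟩, _, ⟨c, rfl⟩, fun τ hτ =>
      satisfies_iff_forall_notMem_falsifyingFace.1 (by simpa using hτ) c hc⟩⟩

theorem mem_models {φ : ImplicationOrder n ℓ} {τ : Fin n → Bool} :
    τ ∈ (models φ).1 ↔ Satisfies τ φ.1 := by
  simp [models]

open Classical in
/-- The conjunction of all clauses that hold throughout a simplex. -/
noncomputable def strongestFormula (σ : clauseComplex n ℓ) : ImplicationOrder n ℓ :=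
  ⟨⟨({c | ∀ τ ∈ σ.1, τ ∉ falsifyingFace c} : Finset (Clause n ℓ)), by
    obtain ⟨-, _, ⟨c, rfl⟩, hc⟩ := σ.2
    exact ⟨c, (Finset.mem_filter_univ c).2 hc⟩⟩, by
    obtain ⟨τ, hτ⟩ := σ.2.1
    exact ⟨τ, satisfies_iff_forall_notMem_falsifyingFace.2 fun c hc =>
      (Finset.mem_filter_univ _).1 hc τ hτ⟩⟩

theorem mem_strongestFormula {σ : clauseComplex n ℓ} {c : Clause n ℓ} :
    c ∈ (strongestFormula σ).1.1 ↔ ∀ τ ∈ σ.1, τ ∉ falsifyingFace c := by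
  simp [strongestFormula]

theorem gc_strongestFormula_models :
    GaloisConnection (strongestFormula : clauseComplex n ℓ → ImplicationOrder n ℓ) models := by
  refine fun σ φ => ⟨fun h τ hτ => mem_models.2 (h τ ?_), fun h τ hτ => ?_⟩
  · exact satisfies_iff_forall_notMem_falsifyingFace.2 fun c hc => mem_strongestFormula.1 hc τ hτ
  · rw [satisfies_iff_forall_notMem_falsifyingFace] at hτ ⊢
    exact fun c hc => hτ c <| mem_strongestFormula.2 fun ρ hρ =>
      satisfies_iff_forall_notMem_falsifyingFace.1 (mem_models.1 (h hρ)) c hc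

end Satisfiability

/-- For `1 ≤ ℓ ≤ n`, the complex `|ℓ-SAT-n|` of satisfiable
`ℓ`-conjunctive formulas in `n` variables is homotopy equivalent to
`Θ(Cube(n, n - ℓ))`. -/
theorem satComplex_homotopyEquiv_theta_cube (n ℓ : ℕ) (hn : 1 ≤ n) (hℓ : 1 ≤ ℓ)
    (hℓn : ℓ ≤ n) :
    Nonempty (ContinuousMap.HomotopyEquiv
      (↥(geomReal (satComplex n ℓ)))
      (↥(geomReal (thetaComplex (cubeEdges n (n - ℓ)))))) := by
  rw [satComplex_eq_orderComplex, ← range_falsifyingFace hℓn]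
  obtain ⟨facesToFormulas⟩ := nonempty_homotopyEquiv_orderComplex_of_galoisConnection
    (gc_strongestFormula_models (n := n) (ℓ := ℓ))
  obtain ⟨subdivision⟩ := nonempty_homotopyEquiv_barycentricSubdivision
    (isRelLowerSet_thetaComplex (Set.range (falsifyingFace (n := n) (ℓ := ℓ))))
  exact ⟨facesToFormulas.symm.trans subdivision⟩
end

section
/- Let P_n denote the cycle graph on n vertices (an n-sided polygon), n ≥ 3. Then Θ(P_n) is homotopy equivalent to a wedge of two copies of S^{2k−2} if n = 3k, to S^{2k−1} if n = 3k+1, and to S^{2k−1} if n = 3k+2. -/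
/-- The unit sphere in `ℝ^d`, i.e. the sphere `S^{d-1}` (empty when `d = 0`). -/
def sphereSpace (d : ℕ) : Set (EuclideanSpace ℝ (Fin d)) := Metric.sphere 0 1

/-- A base point on the unit sphere in `ℝ^d`, `d > 0`. -/
noncomputable def spherePt (d : ℕ) (hd : 0 < d) : ↥(sphereSpace d) :=
  ⟨EuclideanSpace.single (⟨0, hd⟩ : Fin d) 1, by
    simp [sphereSpace, EuclideanSpace.norm_single]⟩

/-- The wedge of copies of a pointed space `(X, x₀)` indexed by `ι`:
the disjoint union with all base points identified. -/
abbrev Wedge (ι : Type*) (X : Type*) [TopologicalSpace X] (x₀ : X) : Type _ :=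
  Quot (fun a b : (Σ _ : ι, X) => a.2 = x₀ ∧ b.2 = x₀)

/-- The cycle graph `P_n` on `n` vertices (an `n`-sided polygon): vertices
`ZMod n` and edges `{i, i+1}`. -/
def cycleEdges (n : ℕ) : Set (Set (ZMod n)) :=
  {e | ∃ i : ZMod n, e = ({i, i + 1} : Set (ZMod n))}

/-!
Removing from a complex a family of faces that is stable under adding and removing a fixed vertex
`v` does not change its homotopy type. Three such removals replace the path `a - b - c - d - e` in
the cycle by the single edge `a - e`, at the price of two new vertices `b` and `d` over which the
complex gets suspended. Hence the cycle can be shortened by `3` at the cost of a double suspension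
until at most three vertices remain. At that point one more removal leaves the boundary of a
simplex or, for three vertices, the boundaries of two simplices glued along a common facet; this
facet being contractible, one gets a wedge of two spheres.
-/

open Set Topology
open scoped ContinuousMap

section Pairs

variable {A B E : Type*} [TopologicalSpace A] [TopologicalSpace B] [TopologicalSpace E]

/-- Homotopy equivalence of pairs `(A, C) ≃ (B, D)`: mutually inverse up to homotopies that stay
in the distinguished subspaces throughout. -/
def HomotopyEquivalentPairs (C : Set A) (D : Set B) : Prop :=
  ∃ (f : C(A, B)) (g : C(B, A)), MapsTo f C D ∧ MapsTo g D C ∧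
    (g.comp f).HomotopicWith (.id A) (MapsTo · C C) ∧
    (f.comp g).HomotopicWith (.id B) (MapsTo · D D)

theorem homotopicWith_mapsTo_conj {C : Set A} {D : Set B} {f : C(A, B)} {g : C(B, A)}
    {h : C(B, B)} (hf : MapsTo f C D) (hg : MapsTo g D C)
    (hh : h.HomotopicWith (.id B) (MapsTo · D D)) :
    (g.comp (h.comp f)).HomotopicWith (g.comp f) (MapsTo · C C) := by
  obtain ⟨H⟩ := hh
  exact ⟨⟨.comp (.refl g) (H.toHomotopy.compContinuousMap f),
    fun t => hg.comp ((H.prop' t).comp hf)⟩⟩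

namespace HomotopyEquivalentPairs

variable {C : Set A} {D : Set B} {K : Set E}

theorem trans (h₁ : HomotopyEquivalentPairs C D) (h₂ : HomotopyEquivalentPairs D K) :
    HomotopyEquivalentPairs C K := by
  obtain ⟨f, g, hf, hg, hgf, hfg⟩ := h₁
  obtain ⟨f', g', hf', hg', hgf', hfg'⟩ := h₂
  exact ⟨f'.comp f, g.comp g', hf'.comp hf, hg.comp hg',
    (homotopicWith_mapsTo_conj hf hg hgf').trans hgf,
    (homotopicWith_mapsTo_conj hg' hf' hfg).trans hfg'⟩

theorem nonempty_homotopyEquiv (h : HomotopyEquivalentPairs C D) : Nonempty (A ≃ₕ B) := by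
  obtain ⟨f, g, -, -, ⟨H⟩, ⟨K⟩⟩ := h
  exact ⟨⟨f, g, ⟨H.toHomotopy⟩, ⟨K.toHomotopy⟩⟩⟩

theorem of_homeomorph (e : A ≃ₜ B) (h : ∀ x, e x ∈ D ↔ x ∈ C) : HomotopyEquivalentPairs C D := by
  refine ⟨e, e.symm, fun x => (h x).2, fun y hy => (h _).1 (by simpa using hy), ?_, ?_⟩
  · rw [e.symm_comp_toContinuousMap]
    exact .refl _ (mapsTo_id _)
  · rw [e.toContinuousMap_comp_symm]
    exact .refl _ (mapsTo_id _)

end HomotopyEquivalentPairs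

end Pairs

section Gluing

variable {ι A B Y Z : Type*} [TopologicalSpace A] [TopologicalSpace B] [TopologicalSpace Y]
  [TopologicalSpace Z]

/-- `q` exhibits `Y` as the space obtained from copies of `A` indexed by `ι` by identifying all
the copies of the subspace `C`. -/
structure IsGluing (C : Set A) (q : (Σ _ : ι, A) → Y) : Prop where
  isQuotientMap : IsQuotientMap q
  apply_eq_apply_iff : ∀ a b, q a = q b ↔ a = b ∨ a.2 = b.2 ∧ a.2 ∈ C

theorem isGluing_wedge (x₀ : A) :
    IsGluing {x₀} (Quot.mk _ : (Σ _ : ι, A) → Wedge ι A x₀) where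
  isQuotientMap := isQuotientMap_quot_mk
  apply_eq_apply_iff := by
    refine fun a b => ⟨fun h => ?_, ?_⟩
    · replace h := Quot.eqvGen_exact h
      induction h with
      | rel _ _ h => exact .inr ⟨h.1.trans h.2.symm, h.1⟩
      | refl => exact .inl rfl
      | symm => grind
      | trans => grind
    · rintro (h | ⟨h, hx⟩)
      · rw [h]
      · exact Quot.sound ⟨hx, h.symm.trans hx⟩

theorem isGluing_snd [Unique ι] (C : Set A) : IsGluing C (Sigma.snd : (Σ _ : ι, A) → A) where
  isQuotientMap :=
    .of_inverse (ContinuousMap.sigmaMk (X := fun _ : ι => A) default).continuous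
      (ContinuousMap.sigma fun _ => .id A).continuous fun _ => rfl
  apply_eq_apply_iff := by
    rintro ⟨i, x⟩ ⟨j, y⟩
    obtain rfl := Subsingleton.elim i j
    simp +contextual

theorem IsGluing.of_retraction [Finite ι] [T2Space Y] {C : Set A} (l : ι → C(A, Y)) (ρ : C(Y, A))
    (hρ : ∀ i x, ρ (l i x) = x) (hl : ∀ y, ∃ i, l i (ρ y) = y)
    (hC : ∀ i j, i ≠ j → ∀ x, l i x = l j x ↔ x ∈ C) :
    IsGluing C fun a : Σ _ : ι, A => l a.1 a.2 where
  isQuotientMap := by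
    have hcl : ∀ i, IsClosedMap (l i) := fun i =>
      (Function.LeftInverse.isClosedEmbedding (hρ i) ρ.continuous (l i).continuous).isClosedMap
    refine IsClosedMap.isQuotientMap (fun s hs => ?_) (ContinuousMap.sigma l).continuous fun y => ?_
    · have himage : (fun a : Σ _ : ι, A => l a.1 a.2) '' s = ⋃ i, l i '' {x | ⟨i, x⟩ ∈ s} := by
        ext; simp
      rw [himage]
      exact isClosed_iUnion_of_finite fun i => hcl i _ (hs.preimage continuous_sigmaMk)
    · obtain ⟨i, hi⟩ := hl y
      exact ⟨⟨i, ρ y⟩, hi⟩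
  apply_eq_apply_iff := by
    rintro ⟨i, x⟩ ⟨j, y⟩
    refine ⟨fun h => ?_, ?_⟩
    · obtain rfl : x = y := by simpa only [hρ] using congrArg ρ h
      grind
    · rintro (h | ⟨rfl, h⟩)
      · cases h; rfl
      · grind

namespace IsGluing

variable {C : Set A} {D : Set B} {q : (Σ _ : ι, A) → Y} {r : (Σ _ : ι, B) → Z}

theorem continuous_apply (hq : IsGluing C q) (i : ι) : Continuous fun x => q ⟨i, x⟩ :=
  hq.isQuotientMap.continuous.comp continuous_sigmaMk

theorem exists_desc (hq : IsGluing C q) (φ : ι → C(A, Z))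
    (hφ : ∀ i j, ∀ x ∈ C, φ i x = φ j x) : ∃ F : C(Y, Z), ∀ i x, F (q ⟨i, x⟩) = φ i x := by
  have hfactor : Function.FactorsThrough (ContinuousMap.sigma φ) q := fun a b h => by
    obtain rfl | ⟨h, hC⟩ := (hq.apply_eq_apply_iff a b).1 h
    · rfl
    · simpa [← h] using hφ _ _ _ hC
  let q' : C(Σ _ : ι, A, Y) := ⟨q, hq.isQuotientMap.continuous⟩
  have hq' : IsQuotientMap q' := hq.isQuotientMap
  exact ⟨hq'.lift _ hfactor, fun i x => DFunLike.congr_fun (hq'.lift_comp _ hfactor) ⟨i, x⟩⟩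

theorem exists_map (hq : IsGluing C q) (hr : IsGluing D r) (f : C(A, B)) (hf : MapsTo f C D) :
    ∃ F : C(Y, Z), ∀ i x, F (q ⟨i, x⟩) = r ⟨i, f x⟩ :=
  hq.exists_desc (fun i => ⟨fun x => r ⟨i, f x⟩, (hr.continuous_apply i).comp f.continuous⟩)
    fun _ _ _ hx => (hr.apply_eq_apply_iff _ _).2 (.inr ⟨rfl, hf hx⟩)

/-- A homotopy `[0, 1] × A → B` descends because it is a map from `A` to the paths in `B`. -/
theorem homotopic_map (hq : IsGluing C q) (hr : IsGluing D r) {f₀ f₁ : C(A, B)} {F₀ F₁ : C(Y, Z)}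
    (h₀ : ∀ i x, F₀ (q ⟨i, x⟩) = r ⟨i, f₀ x⟩) (h₁ : ∀ i x, F₁ (q ⟨i, x⟩) = r ⟨i, f₁ x⟩)
    (h : f₀.HomotopicWith f₁ (MapsTo · C D)) : F₀.Homotopic F₁ := by
  obtain ⟨H⟩ := h
  have hH : ∀ i, Continuous fun p : A × unitInterval => r ⟨i, H (p.2, p.1)⟩ :=
    fun i => (hr.continuous_apply i).comp (by fun_prop)
  obtain ⟨G, hG⟩ := hq.exists_desc (fun i => ContinuousMap.curry ⟨_, hH i⟩) fun i j x hx => by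
    ext t
    exact (hr.apply_eq_apply_iff _ _).2 (.inr ⟨rfl, H.prop' t hx⟩)
  refine ⟨⟨⟨fun p => G p.2 p.1, by fun_prop⟩, fun y => ?_, fun y => ?_⟩⟩ <;>
    obtain ⟨⟨i, x⟩, rfl⟩ := hq.isQuotientMap.surjective y
  · simp [hG, h₀]
  · simp [hG, h₁]

theorem nonempty_homotopyEquiv (hq : IsGluing C q) (hr : IsGluing D r)
    (h : HomotopyEquivalentPairs C D) : Nonempty (Y ≃ₕ Z) := by
  obtain ⟨f, g, hf, hg, hgf, hfg⟩ := h
  obtain ⟨F, hF⟩ := hq.exists_map hr f hf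
  obtain ⟨G, hG⟩ := hr.exists_map hq g hg
  exact ⟨⟨F, G, hq.homotopic_map hq (by simp [hF, hG]) (by simp) hgf,
    hr.homotopic_map hr (by simp [hF, hG]) (by simp) hfg⟩⟩

end IsGluing

end Gluing

section Slice

variable {E : Type*} [AddCommGroup E] [Module ℝ E] [TopologicalSpace E] [ContinuousSMul ℝ E]
  {X S : Set E} {N : E → ℝ}

theorem homotopyEquivalentPairs_slice (hX : ∀ c : ℝ, 0 < c → ∀ x ∈ X, c • x ∈ X)
    (hN : ContinuousOn N X) (hpos : ∀ x ∈ X, 0 < N x)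
    (hsmul : ∀ c : ℝ, 0 < c → ∀ x ∈ X, N (c • x) = c * N x) (hS : S = {x ∈ X | N x = 1})
    {C : Set E} (hC : ∀ c : ℝ, 0 < c → ∀ x ∈ C, c • x ∈ C) :
    HomotopyEquivalentPairs ((↑) ⁻¹' C : Set X) ((↑) ⁻¹' C : Set S) := by
  subst hS
  let scale : C(X, ℝ) := ⟨fun x => (N x)⁻¹, hN.domRestrict.inv₀ fun x => (hpos x x.2).ne'⟩
  have hscale_apply : ∀ x, scale x = (N x)⁻¹ := fun _ => rfl
  have hscale : ∀ x : X, 0 < scale x := fun x => inv_pos.2 (hpos x x.2)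
  have hline : ∀ (t : unitInterval) (x : X), 0 < AffineMap.lineMap (scale x) 1 (t : ℝ) :=
    fun t x => (convex_Ioi (0 : ℝ)).lineMap_mem (hscale x) (mem_Ioi.2 one_pos) t.2
  let normalize : C(X, {x ∈ X | N x = 1}) := ⟨fun x => ⟨scale x • (x : E), hX _ (hscale x) x x.2, by
    rw [hsmul _ (hscale x) x x.2]; exact inv_mul_cancel₀ (hpos x x.2).ne'⟩, by fun_prop⟩
  let incl : C({x ∈ X | N x = 1}, X) := ⟨fun x => ⟨x, x.2.1⟩, by fun_prop⟩
  have hnormalize : normalize.comp incl = .id _ := by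
    ext1 x
    exact Subtype.ext <| by simp [normalize, incl, hscale_apply, x.2.2]
  refine ⟨normalize, incl, fun x => hC _ (hscale x) x, fun x hx => hx,
    ⟨⟨⟨⟨fun p => ⟨AffineMap.lineMap (scale p.2) 1 (p.1 : ℝ) • (p.2 : E),
      hX _ (hline ..) _ p.2.2⟩, ?_⟩, fun x => ?_, fun x => ?_⟩, fun t x => hC _ (hline t x) x⟩⟩,
    by rw [hnormalize]; exact .refl _ (mapsTo_id _)⟩
  · simp only [AffineMap.lineMap_apply_module]
    fun_prop
  · simp [normalize, incl]
  · simp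

end Slice

section PuncturedCone

variable {V : Type*}

/-- The cone over the geometric realization of the complex `D`, without its apex: the
unnormalised counterpart of `geomReal`, on which supports may be changed without rescaling.
A complex is encoded as a lower set of sets of vertices, so that `∅` is one of its faces. -/
def puncturedCone (D : LowerSet (Set V)) : Set (V → ℝ) :=
  {f | 0 ≤ f ∧ f ≠ 0 ∧ Function.support f ∈ D}

theorem isClosed_setOf_support_mem [Finite V] (D : LowerSet (Set V)) :
    IsClosed {f : V → ℝ | Function.support f ∈ D} := by
  have hunion : {f : V → ℝ | Function.support f ∈ D} =
      ⋃ τ ∈ D, ⋂ v ∉ τ, {f : V → ℝ | f v = 0} := by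
    ext f
    simp only [mem_ofPred_eq, mem_iUnion, mem_iInter, exists_prop]
    exact ⟨fun h => ⟨_, h, fun v => Function.notMem_support.1⟩, fun ⟨τ, hτ, h⟩ =>
      D.lower (fun v hv => by_contra fun hvτ => hv (h v hvτ)) hτ⟩
  rw [hunion]
  refine (Set.toFinite (D : Set (Set V))).isClosed_biUnion fun σ _ => ?_
  exact isClosed_biInter fun v _ => isClosed_eq (continuous_apply v) continuous_const

theorem nonempty_homotopyEquiv_geomReal_puncturedCone [Finite V] (D : LowerSet (Set V)) :
    Nonempty (geomReal {σ : Finset V | σ.Nonempty ∧ (σ : Set V) ∈ D} ≃ₕ puncturedCone D) := by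
  have := Fintype.ofFinite V
  have hsum_pos : ∀ f ∈ puncturedCone D, 0 < ∑ v, f v := fun f hf =>
    Fintype.sum_pos (lt_of_le_of_ne hf.1 hf.2.1.symm)
  have hgeom : geomReal {σ : Finset V | σ.Nonempty ∧ (σ : Set V) ∈ D} =
      {f ∈ puncturedCone D | ∑ v, f v = 1} := by
    ext f
    constructor
    · rintro ⟨hnonneg, σ, ⟨-, hσD⟩, hsupp, hsum⟩
      rw [Finset.sum_subset (Finset.subset_univ σ) fun v _ hv => by_contra fun h => hv (hsupp v h)]
        at hsum
      exact ⟨⟨hnonneg, by rintro rfl; simp at hsum, D.lower hsupp hσD⟩, hsum⟩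
    · classical
      rintro ⟨⟨hnonneg, hne, hsupp⟩, hsum⟩
      refine ⟨hnonneg, Finset.univ.filter (f · ≠ 0), ⟨?_, ?_⟩, by simp, ?_⟩
      · simpa [Finset.filter_nonempty_iff] using Function.ne_iff.1 hne
      · simpa [Function.support] using hsupp
      · rwa [Finset.sum_filter_ne_zero]
  have hsmul : ∀ c : ℝ, 0 < c → ∀ f ∈ puncturedCone D, c • f ∈ puncturedCone D :=
    fun c hc f hf => ⟨smul_nonneg hc.le hf.1, smul_ne_zero hc.ne' hf.2.1, by
      rw [Function.support_const_smul_of_ne_zero c f hc.ne']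
      exact hf.2.2⟩
  obtain ⟨e⟩ := (homotopyEquivalentPairs_slice hsmul (by fun_prop) hsum_pos
    (fun c _ f _ => by simp [Finset.mul_sum]) hgeom (C := univ)
    fun _ _ _ _ => trivial).nonempty_homotopyEquiv
  exact ⟨e.symm⟩

section ShiftTo

variable [DecidableEq V]

/-- Moves weight `c` onto the vertex `v` while taking weight `c`, as far as available, from each
of the other vertices. -/
def shiftTo (v : V) (c : ℝ) (f : V → ℝ) : V → ℝ :=
  fun u => if u = v then f u + c else max (f u - c) 0

theorem continuous_shiftTo (v : V) : Continuous fun p : ℝ × (V → ℝ) => shiftTo v p.1 p.2 := by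
  refine continuous_pi fun u => ?_
  by_cases hu : u = v <;> simp only [shiftTo, hu, if_true, if_false] <;> fun_prop

theorem shiftTo_zero (v : V) {f : V → ℝ} (hf : 0 ≤ f) : shiftTo v 0 f = f := by
  ext u
  have := hf u
  simp_all [shiftTo]

theorem shiftTo_nonneg (v : V) {c : ℝ} (hc : 0 ≤ c) {f : V → ℝ} (hf : 0 ≤ f) :
    0 ≤ shiftTo v c f := fun u => by
  have := hf u
  simp only [shiftTo, Pi.zero_apply] at *
  split_ifs <;> positivity

theorem support_shiftTo_subset (v : V) {c : ℝ} (hc : 0 ≤ c) {f : V → ℝ} (hf : 0 ≤ f) :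
    Function.support (shiftTo v c f) ⊆ insert v (Function.support f) := fun u hu => by
  have := hf u
  simp only [shiftTo, Function.mem_support, mem_insert_iff, Pi.zero_apply] at *
  grind

theorem shiftTo_mem_puncturedCone {E : LowerSet (Set V)} {v : V} {c : ℝ} (hc : 0 ≤ c) {f : V → ℝ}
    (hf : f ∈ puncturedCone E) (hE : c ≠ 0 → insert v (Function.support f) ∈ E) :
    shiftTo v c f ∈ puncturedCone E := by
  rcases hc.eq_or_lt with rfl | hc'
  · rwa [shiftTo_zero v hf.1]
  · refine ⟨shiftTo_nonneg v hc hf.1, fun h => ?_,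
      E.lower (support_shiftTo_subset v hc hf.1) (hE hc'.ne')⟩
    have := congrFun h v
    have := hf.1 v
    simp [shiftTo] at *
    linarith

theorem support_shiftTo_infDist_diff_mem [Fintype V] {D : LowerSet (Set V)} (hD : ∅ ∈ D) {v : V}
    {f : V → ℝ} :
    Function.support (shiftTo v (Metric.infDist f {g | Function.support g ∈ D}) f) \ {v} ∈ D := by
  obtain ⟨g, hg, hdist⟩ := (isClosed_setOf_support_mem D).exists_infDist_eq_dist
    ⟨0, by simpa using hD⟩ f
  rw [hdist]
  refine D.lower (fun u hu => ?_) hg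
  have hfg : f u - g u ≤ dist f g := (le_abs_self _).trans (dist_le_pi_dist f g u)
  obtain ⟨hu, huv⟩ := hu
  simp only [shiftTo, Function.mem_support, mem_singleton_iff] at *
  grind

end ShiftTo

/-- The weight on the faces outside `D` is pushed onto `v`, by an amount equal to the distance to
the realization of `D`; toggle-invariance keeps this inside `E` and ends in `D`. -/
theorem nonempty_homotopyEquiv_puncturedCone_of_toggle [Finite V] {D E : LowerSet (Set V)} (v : V)
    (hDE : D ≤ E) (hD : ∅ ∈ D) (h : ∀ σ, insert v σ ∈ E ∧ insert v σ ∉ D ↔ σ ∈ E ∧ σ ∉ D) :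
    Nonempty (puncturedCone E ≃ₕ puncturedCone D) := by
  classical
  have := Fintype.ofFinite V
  set gap : (V → ℝ) → ℝ := fun f => Metric.infDist f {g | Function.support g ∈ D}
  have hgap_cont : Continuous gap := Metric.continuous_infDist_pt _
  have hgap_nonneg : ∀ f, 0 ≤ gap f := fun f => Metric.infDist_nonneg
  have hgap : ∀ f ∈ puncturedCone D, gap f = 0 := fun f hf => Metric.infDist_zero_of_mem hf.2.2
  have hshift : ∀ f ∈ puncturedCone E, ∀ t : unitInterval,
      shiftTo v (t * gap f) f ∈ puncturedCone E := fun f hf t => by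
    refine shiftTo_mem_puncturedCone (mul_nonneg t.2.1 (hgap_nonneg f)) hf fun h0 => ?_
    exact ((h _).2 ⟨hf.2.2, fun hfD => h0 (by rw [hgap f ⟨hf.1, hf.2.1, hfD⟩, mul_zero])⟩).1
  have hshift_one : ∀ f ∈ puncturedCone E, shiftTo v (gap f) f ∈ puncturedCone D := fun f hf => by
    obtain ⟨hnonneg, hne, hsupp⟩ : shiftTo v (gap f) f ∈ puncturedCone E := by
      simpa using hshift f hf 1
    refine ⟨hnonneg, hne, by_contra fun hnot => ?_⟩
    refine ((h (Function.support (shiftTo v (gap f) f) \ {v})).1 ?_).2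
      (support_shiftTo_infDist_diff_mem hD)
    rw [insert_sdiff_singleton]
    exact (h _).2 ⟨hsupp, hnot⟩
  have hcont : Continuous fun p : unitInterval × puncturedCone E => shiftTo v (p.1 * gap p.2) p.2 :=
    (continuous_shiftTo v).comp (f := fun p : unitInterval × puncturedCone E =>
      ((p.1 : ℝ) * gap p.2, (p.2 : V → ℝ))) (by fun_prop)
  let push : C(puncturedCone E, puncturedCone D) := ⟨fun f => ⟨_, hshift_one f f.2⟩,
    .subtype_mk (by simpa [Function.comp_def] using hcont.comp (.prodMk_right 1)) _⟩
  let incl : C(puncturedCone D, puncturedCone E) :=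
    ⟨fun f => ⟨f, f.2.1, f.2.2.1, hDE f.2.2.2⟩, by fun_prop⟩
  have hpush : push.comp incl = .id _ := by
    ext1 f
    exact Subtype.ext <| by simp [push, incl, hgap f f.2, shiftTo_zero v f.2.1]
  have hincl : (ContinuousMap.id _).Homotopic (incl.comp push) :=
    ⟨⟨⟨fun p => ⟨_, hshift p.2 p.2.2 p.1⟩, by fun_prop⟩,
      fun f => Subtype.ext <| by simp [shiftTo_zero v f.2.1],
      fun f => Subtype.ext <| by simp [push, incl]⟩⟩
  exact ⟨⟨push, incl, hincl.symm, hpush ▸ .refl _⟩⟩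

end PuncturedCone

section Orthant

/-- The open ray spanned by `e`. -/
def openRay {E : Type*} [AddCommGroup E] [Module ℝ E] (e : E) : Set E :=
  (fun c : ℝ => c • e) '' Ioi 0

variable {W : Type*} [Fintype W]

/-- Squeezes the nonnegative orthant of `ℝ^W` onto the ray spanned by the all-ones vector. -/
def squeezeOrthant (x : W → ℝ) : W → ℝ := fun w => ‖x⁺‖ - (x w)⁻

theorem continuous_squeezeOrthant : Continuous (squeezeOrthant : (W → ℝ) → W → ℝ) := by
  have hpos : Continuous (posPart : (W → ℝ) → W → ℝ) :=
    continuous_pi fun w => continuous_posPart.comp (continuous_apply w)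
  exact continuous_pi fun w =>
    (continuous_norm.comp hpos).sub (continuous_negPart.comp (continuous_apply w))

theorem squeezeOrthant_of_nonneg {x : W → ℝ} (hx : 0 ≤ x) : squeezeOrthant x = ‖x‖ • 1 := by
  ext w
  simp [squeezeOrthant, posPart_of_nonneg hx, negPart_of_nonneg (hx w)]

theorem squeezeOrthant_of_nonpos {x : W → ℝ} (hx : x ≤ 0) : squeezeOrthant x = x := by
  ext w
  simp [squeezeOrthant, posPart_of_nonpos hx, negPart_of_nonpos (hx w)]

theorem squeezeOrthant_apply_pos {x : W → ℝ} {w : W} (hw : 0 < x w) : 0 < squeezeOrthant x w := by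
  have : x w ≤ ‖x⁺‖ := (le_posPart (x w)).trans ((le_abs_self _).trans (norm_le_pi_norm x⁺ w))
  simp only [squeezeOrthant, negPart_of_nonneg hw.le]
  linarith

theorem lineMap_squeezeOrthant_ne_zero {x : W → ℝ} (hx : x ≠ 0) (t : unitInterval) :
    AffineMap.lineMap (squeezeOrthant x) x (t : ℝ) ≠ 0 := by
  by_cases hpos : ∃ w, 0 < x w
  · obtain ⟨w, hw⟩ := hpos
    have hline : 0 < AffineMap.lineMap (squeezeOrthant x w) (x w) (t : ℝ) :=
      (convex_Ioi (0 : ℝ)).lineMap_mem (squeezeOrthant_apply_pos hw) hw t.2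
    exact fun h => hline.ne' (by simpa [AffineMap.pi_lineMap_apply] using congrFun h w)
  · rw [squeezeOrthant_of_nonpos fun w => not_lt.1 fun h => hpos ⟨w, h⟩]
    simpa using hx

theorem homotopicWith_id_squeezeOrthant {f : C(({0}ᶜ : Set (W → ℝ)), ({0}ᶜ : Set (W → ℝ)))}
    (hf : ∀ x, (f x : W → ℝ) = squeezeOrthant (x : W → ℝ))
    {C : Set (W → ℝ)} (hC : Convex ℝ C) (hmaps : MapsTo squeezeOrthant C C) :
    f.HomotopicWith (.id _) (MapsTo · ((↑) ⁻¹' C : Set ({0}ᶜ : Set (W → ℝ))) ((↑) ⁻¹' C)) := by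
  refine ⟨⟨⟨⟨fun p => ⟨_, lineMap_squeezeOrthant_ne_zero p.2.2 p.1⟩, ?_⟩, fun x => ?_, fun x => ?_⟩,
    fun t x hx => hC.lineMap_mem (hmaps hx) hx t.2⟩⟩
  · have := continuous_squeezeOrthant (W := W)
    simp only [AffineMap.lineMap_apply_module]
    fun_prop
  · exact Subtype.ext <| by simp [hf]
  · simp

theorem homotopyEquivalentPairs_orthant_openRay {W : Type*} [Finite W] [Nonempty W] :
    HomotopyEquivalentPairs ((↑) ⁻¹' Ici (0 : W → ℝ) : Set ({0}ᶜ : Set (W → ℝ)))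
      ((↑) ⁻¹' openRay (1 : W → ℝ) : Set ({0}ᶜ : Set (W → ℝ))) := by
  have := Fintype.ofFinite W
  have hray : ∀ x ∈ openRay (1 : W → ℝ), 0 ≤ x := by
    rintro _ ⟨c, hc, rfl⟩ w
    simpa using le_of_lt hc
  have hfix : ∀ x ∈ openRay (1 : W → ℝ), squeezeOrthant x = x := by
    intro x hx
    rw [squeezeOrthant_of_nonneg (hray x hx)]
    obtain ⟨c, hc, rfl⟩ := hx
    simp [norm_smul, abs_of_pos hc.out]
  have hne : ∀ x : ({0}ᶜ : Set (W → ℝ)), squeezeOrthant (x : W → ℝ) ≠ 0 := fun x => by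
    simpa using lineMap_squeezeOrthant_ne_zero x.2 0
  let f : C(({0}ᶜ : Set (W → ℝ)), ({0}ᶜ : Set (W → ℝ))) := ⟨fun x => ⟨_, hne x⟩,
    (continuous_squeezeOrthant.comp continuous_subtype_val).subtype_mk hne⟩
  refine ⟨f, .id _, fun x hx => ?_, fun x hx => hray x hx,
    homotopicWith_id_squeezeOrthant (fun _ => rfl) (convex_Ici 0) fun x hx => ?_,
    homotopicWith_id_squeezeOrthant (fun _ => rfl)
      ((convex_Ioi 0).is_linear_image ⟨by simp [add_smul], by simp [mul_smul]⟩)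
      fun x hx => (hfix x hx).symm ▸ hx⟩
  · exact ⟨‖(x : W → ℝ)‖, norm_pos_iff.2 x.2, (squeezeOrthant_of_nonneg hx).symm⟩
  · rw [mem_Ici, squeezeOrthant_of_nonneg hx]
    exact smul_nonneg (norm_nonneg x) zero_le_one

theorem homotopyEquivalentPairs_openRay {E F : Type*} [NormedAddCommGroup E] [NormedSpace ℝ E]
    [FiniteDimensional ℝ E] [NormedAddCommGroup F] [NormedSpace ℝ F] [FiniteDimensional ℝ F]
    (h : Module.finrank ℝ E = Module.finrank ℝ F) {x : E} {y : F} (hx : x ≠ 0) (hy : y ≠ 0) :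
    HomotopyEquivalentPairs ((↑) ⁻¹' openRay x : Set ({0}ᶜ : Set E))
      ((↑) ⁻¹' openRay y : Set ({0}ᶜ : Set F)) := by
  let T := ContinuousLinearEquiv.ofFinrankEq h
  obtain ⟨U, hU⟩ := SeparatingDual.exists_continuousLinearEquiv_apply_eq (R := ℝ)
    ((map_ne_zero_iff T T.injective).2 hx) hy
  refine .of_homeomorph ((T.trans U).toHomeomorph.subtype fun z => by simp) fun z => ?_
  change U (T z) ∈ openRay y ↔ (z : E) ∈ openRay x
  simp only [openRay, mem_image, ← hU, ← map_smul, EmbeddingLike.apply_eq_iff_eq]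

theorem homotopyEquivalentPairs_openRay_spherePt (m : ℕ) (hm : 0 < m) :
    HomotopyEquivalentPairs ((↑) ⁻¹' openRay (spherePt m hm : EuclideanSpace ℝ (Fin m)) :
      Set ({0}ᶜ : Set (EuclideanSpace ℝ (Fin m)))) {spherePt m hm} := by
  convert homotopyEquivalentPairs_slice (X := {0}ᶜ) (S := sphereSpace m) (N := norm)
    (C := openRay (spherePt m hm : EuclideanSpace ℝ (Fin m))) ?_ continuous_norm.continuousOn ?_ ?_
    ?_ ?_ using 1
  · have hnorm : ∀ x : sphereSpace m, ‖(x : EuclideanSpace ℝ (Fin m))‖ = 1 := fun x =>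
      mem_sphere_zero_iff_norm.1 x.2
    ext x
    simp only [mem_singleton_iff, mem_preimage, openRay, mem_image]
    refine ⟨fun h => ⟨1, mem_Ioi.2 one_pos, by rw [h, one_smul]⟩, fun ⟨c, hc, h⟩ => Subtype.ext ?_⟩
    have hc1 : c = 1 := by
      simpa [norm_smul, hnorm, abs_of_pos hc.out] using congrArg norm h
    rw [← h, hc1, one_smul]
  · exact fun c hc x hx => smul_ne_zero hc.ne' hx
  · exact fun x hx => norm_pos_iff.2 hx
  · exact fun c hc x _ => by rw [norm_smul, Real.norm_of_nonneg hc.le]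
  · ext x
    rw [sphereSpace, mem_sphere_zero_iff_norm]
    exact ⟨fun h => ⟨by rintro rfl; simp at h, h⟩, And.right⟩
  · rintro c hc _ ⟨d, hd, rfl⟩
    exact ⟨c * d, mul_pos hc hd, mul_smul c d _⟩

theorem homotopyEquivalentPairs_orthant_spherePt {m : ℕ} (hm : 0 < m) (hW : Fintype.card W = m) :
    HomotopyEquivalentPairs ((↑) ⁻¹' Ici (0 : W → ℝ) : Set ({0}ᶜ : Set (W → ℝ)))
      {spherePt m hm} := by
  have : Nonempty W := Fintype.card_pos_iff.1 (hW ▸ hm)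
  exact (homotopyEquivalentPairs_orthant_openRay.trans
    (homotopyEquivalentPairs_openRay (by simpa) one_ne_zero (by simp [spherePt]))).trans
    (homotopyEquivalentPairs_openRay_spherePt m hm)

end Orthant

section Bouquet

section NegPart

variable {W : Type*} [Fintype W] {x : W → ℝ}

theorem neg_norm_negPart_le (x : W → ℝ) (w : W) : -‖x⁻‖ ≤ x w :=
  neg_le.1 <| (neg_le_negPart (x w)).trans <| (le_abs_self _).trans (norm_le_pi_norm x⁻ w)

theorem exists_eq_neg_norm_negPart (hx : ‖x⁻‖ ≠ 0) : ∃ w, x w = -‖x⁻‖ := by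
  by_contra! hne
  have hpos : 0 < ‖x⁻‖ := (norm_nonneg _).lt_of_ne' hx
  refine lt_irrefl ‖x⁻‖ ((pi_norm_lt_iff hpos).2 fun w => ?_)
  have := (neg_norm_negPart_le x w).lt_of_ne' (hne w)
  rw [Pi.negPart_apply, Real.norm_of_nonneg (negPart_nonneg _), negPart_def, max_lt_iff]
  exact ⟨by linarith, hpos⟩

theorem norm_negPart_eq {c : ℝ} (hc : 0 ≤ c) (hle : ∀ w, -c ≤ x w)
    (hattained : c ≠ 0 → ∃ w, x w = -c) : ‖x⁻‖ = c := by
  refine le_antisymm ((pi_norm_le_iff_of_nonneg hc).2 fun w => ?_) ?_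
  · rw [Pi.negPart_apply, Real.norm_of_nonneg (negPart_nonneg _), negPart_def, max_le_iff]
    exact ⟨neg_le.1 (hle w), hc⟩
  · rcases eq_or_ne c 0 with rfl | hc0
    · exact norm_nonneg _
    · obtain ⟨w, hw⟩ := hattained hc0
      linarith [neg_norm_negPart_le x w]

theorem norm_negPart_eq_zero_iff : ‖x⁻‖ = 0 ↔ 0 ≤ x := by
  rw [norm_eq_zero, negPart_eq_zero]

end NegPart

variable {V ι : Type*} {S : Set V} {a : ι → V}

/-- The boundaries of the simplices with vertices `S ∪ {a i}`, glued along their common facet `S`,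
which is itself a face. -/
def simplexBouquet (S : Set V) (a : ι → V) : LowerSet (Set V) where
  carrier := {σ | σ ⊆ S ∪ range a ∧ (∀ i j, a i ∈ σ → a j ∈ σ → i = j) ∧ ∀ i, a i ∈ σ → ¬S ⊆ σ}
  lower' _ _ hτσ hσ := ⟨hτσ.trans hσ.1, fun i j hi hj => hσ.2.1 i j (hτσ hi) (hτσ hj),
    fun i hi hS => hσ.2.2 i (hτσ hi) (hS.trans hτσ)⟩

/-- Coordinates on the boundary of the simplex with vertices `S ∪ {a i}`: adding the all-ones
vector to a point of `ℝ^S` until it is nonnegative, and recording the amount added at `a i`,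
identifies `ℝ^S ∖ {0}` with the cone over that boundary, and the nonnegative orthant with the cone
over the facet `S`. -/
noncomputable def bouquetChart (S : Set V) [Fintype S] (a : ι → V) (i : ι) (x : S → ℝ) : V → ℝ :=
  open Classical in fun u => if h : u ∈ S then x ⟨u, h⟩ + ‖x⁻‖ else if u = a i then ‖x⁻‖ else 0

/-- The common inverse of the charts `bouquetChart S a i`. -/
def bouquetRetraction [Fintype ι] (S : Set V) (a : ι → V) (f : V → ℝ) : S → ℝ :=
  fun s => f s - ∑ i, f (a i)

theorem continuous_bouquetRetraction [Fintype ι] : Continuous (bouquetRetraction S a) := by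
  unfold bouquetRetraction
  fun_prop

section Chart

variable [Fintype S]

theorem bouquetChart_apply_mem {i : ι} {x : S → ℝ} (s : S) :
    bouquetChart S a i x s = x s + ‖x⁻‖ := by
  simp [bouquetChart]

theorem bouquetChart_apply_apex (ha : ∀ i, a i ∉ S) (hinj : Function.Injective a) [DecidableEq ι]
    {i j : ι} {x : S → ℝ} : bouquetChart S a i x (a j) = if j = i then ‖x⁻‖ else 0 := by
  simp [bouquetChart, ha, hinj.eq_iff]

theorem continuous_bouquetChart (i : ι) : Continuous (bouquetChart S a i) := by
  have hneg : Continuous fun x : S → ℝ => ‖x⁻‖ :=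
    continuous_norm.comp (continuous_pi fun w => continuous_negPart.comp (continuous_apply w))
  refine continuous_pi fun u => ?_
  unfold bouquetChart
  split_ifs <;> fun_prop

theorem bouquetRetraction_bouquetChart [Fintype ι] (ha : ∀ i, a i ∉ S)
    (hinj : Function.Injective a) (i : ι) (x : S → ℝ) :
    bouquetRetraction S a (bouquetChart S a i x) = x := by
  classical
  ext s
  simp [bouquetRetraction, bouquetChart_apply_mem, bouquetChart_apply_apex ha hinj]

theorem bouquetChart_eq_bouquetChart_iff (ha : ∀ i, a i ∉ S) (hinj : Function.Injective a) {i j : ι}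
    (hij : i ≠ j) (x : S → ℝ) : bouquetChart S a i x = bouquetChart S a j x ↔ 0 ≤ x := by
  classical
  rw [← norm_negPart_eq_zero_iff]
  refine ⟨fun h => ?_, fun h => ?_⟩
  · simpa [bouquetChart_apply_apex ha hinj, hij] using congrFun h (a i)
  · unfold bouquetChart
    simp [h]

theorem bouquetChart_mem_puncturedCone (ha : ∀ i, a i ∉ S) (hinj : Function.Injective a) (i : ι)
    {x : S → ℝ} (hx : x ≠ 0) : bouquetChart S a i x ∈ puncturedCone (simplexBouquet S a) := by
  classical
  have happly : ∀ j, bouquetChart S a i x (a j) ≠ 0 → j = i ∧ ‖x⁻‖ ≠ 0 := fun j hj => by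
    simpa [bouquetChart_apply_apex ha hinj] using hj
  refine ⟨fun u => ?_, fun h => hx ?_, fun u hu => ?_, fun j k hj hk => ?_, fun j hj hS => ?_⟩
  · by_cases hu : u ∈ S
    · have := neg_norm_negPart_le x ⟨u, hu⟩
      simp only [bouquetChart, hu, dif_pos, Pi.zero_apply]
      linarith
    · simp only [bouquetChart, hu, dif_neg, not_false_eq_true, Pi.zero_apply]
      positivity
  · have hnorm : ‖x⁻‖ = 0 := by simpa [bouquetChart_apply_apex ha hinj] using congrFun h (a i)
    ext s
    simpa [bouquetChart_apply_mem, hnorm] using congrFun h s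
  · by_contra hnot
    simp only [mem_union, mem_range, not_or, not_exists] at hnot
    simp [bouquetChart, hnot.1, Ne.symm (hnot.2 i)] at hu
  · exact (happly j hj).1.trans (happly k hk).1.symm
  · obtain ⟨s, hs⟩ := exists_eq_neg_norm_negPart (happly j hj).2
    exact hS s.2 (by rw [bouquetChart_apply_mem, hs, neg_add_cancel])

end Chart

section Retraction

variable [Fintype ι] [Nonempty ι] {f : V → ℝ}

theorem exists_sum_apex_eq (hf : f ∈ puncturedCone (simplexBouquet S a)) :
    ∃ i, ∑ j, f (a j) = f (a i) ∧ (∀ u ∉ S, u ≠ a i → f u = 0) ∧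
      (f (a i) ≠ 0 → ∃ s ∈ S, f s = 0) := by
  have hrange : ∀ u ∉ S, f u ≠ 0 → ∃ j, a j = u := fun u hu hfu => (hf.2.2.1 hfu).resolve_left hu
  by_cases h : ∃ i, f (a i) ≠ 0
  · obtain ⟨i, hi⟩ := h
    have huniq : ∀ j, j ≠ i → f (a j) = 0 :=
      fun j hji => by_contra fun hj => hji (hf.2.2.2.1 j i hj hi)
    refine ⟨i, Fintype.sum_eq_single i huniq, fun u hu hui => ?_, fun _ => ?_⟩
    · by_contra hfu
      obtain ⟨j, rfl⟩ := hrange u hu hfu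
      exact hfu (huniq j fun hji => hui (congrArg a hji))
    · obtain ⟨s, hsS, hs⟩ := not_subset.1 (hf.2.2.2.2 i hi)
      exact ⟨s, hsS, by simpa using hs⟩
  · push Not at h
    refine ⟨Classical.arbitrary ι, by simp [h], fun u hu _ => ?_, fun hne => absurd (h _) hne⟩
    by_contra hfu
    obtain ⟨j, rfl⟩ := hrange u hu hfu
    exact hfu (h j)

theorem bouquetRetraction_ne_zero (hf : f ∈ puncturedCone (simplexBouquet S a)) :
    bouquetRetraction S a f ≠ 0 := by
  intro hzero
  obtain ⟨i, hsum, hsupp, hface⟩ := exists_sum_apex_eq hf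
  have hconst : ∀ s ∈ S, f s = f (a i) := fun s hs => by
    have := congrFun hzero ⟨s, hs⟩
    rwa [bouquetRetraction, hsum, Pi.zero_apply, sub_eq_zero] at this
  have hi : f (a i) = 0 := by
    by_contra hi
    obtain ⟨s, hsS, hs⟩ := hface hi
    exact hi (by rw [← hconst s hsS, hs])
  refine hf.2.1 (funext fun u => ?_)
  by_cases hu : u ∈ S
  · rw [hconst u hu, hi, Pi.zero_apply]
  · rcases eq_or_ne u (a i) with rfl | hui
    · exact hi
    · exact hsupp u hu hui

theorem exists_bouquetChart_bouquetRetraction_eq [Fintype S]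
    (hf : f ∈ puncturedCone (simplexBouquet S a)) :
    ∃ i, bouquetChart S a i (bouquetRetraction S a f) = f := by
  obtain ⟨i, hsum, hsupp, hface⟩ := exists_sum_apex_eq hf
  have hnorm : ‖(bouquetRetraction S a f)⁻‖ = f (a i) := by
    refine norm_negPart_eq (hf.1 _) (fun s => ?_) fun hi => ?_
    · have := hf.1 s
      simp only [bouquetRetraction, hsum, Pi.zero_apply] at this ⊢
      linarith
    · obtain ⟨s, hsS, hs⟩ := hface hi
      exact ⟨⟨s, hsS⟩, by simp [bouquetRetraction, hsum, hs]⟩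
  refine ⟨i, funext fun u => ?_⟩
  unfold bouquetChart
  split_ifs with hu hui
  · simp [hnorm, bouquetRetraction, hsum]
  · rw [hnorm, hui]
  · exact (hsupp u hu hui).symm

end Retraction

theorem isGluing_bouquetChart [Fintype S] [Finite ι] [Nonempty ι] (ha : ∀ i, a i ∉ S)
    (hinj : Function.Injective a) :
    IsGluing ((↑) ⁻¹' Ici (0 : S → ℝ) : Set ({0}ᶜ : Set (S → ℝ)))
      fun p : Σ _ : ι, ({0}ᶜ : Set (S → ℝ)) =>
        (⟨bouquetChart S a p.1 p.2, bouquetChart_mem_puncturedCone ha hinj p.1 p.2.2⟩ :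
          puncturedCone (simplexBouquet S a)) := by
  have := Fintype.ofFinite ι
  refine .of_retraction
    (fun i => ⟨_, ((continuous_bouquetChart i).comp continuous_subtype_val).subtype_mk
      fun x => bouquetChart_mem_puncturedCone ha hinj i x.2⟩)
    ⟨fun f => ⟨bouquetRetraction S a f, bouquetRetraction_ne_zero f.2⟩,
      .subtype_mk (continuous_bouquetRetraction.comp continuous_subtype_val) _⟩
    (fun i x => Subtype.ext (bouquetRetraction_bouquetChart ha hinj i _)) (fun f => ?_)
    fun i j hij x => Subtype.ext_iff.trans (bouquetChart_eq_bouquetChart_iff ha hinj hij x.1)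
  obtain ⟨i, hi⟩ := exists_bouquetChart_bouquetRetraction_eq f.2
  exact ⟨i, Subtype.ext hi⟩

theorem nonempty_homotopyEquiv_puncturedCone_simplexBouquet [Finite S] [Finite ι] [Nonempty ι]
    (ha : ∀ i, a i ∉ S) (hinj : Function.Injective a) {m : ℕ} (hm : 0 < m) (hS : S.ncard = m)
    {Z : Type*} [TopologicalSpace Z] {r : (Σ _ : ι, sphereSpace m) → Z}
    (hr : IsGluing {spherePt m hm} r) :
    Nonempty (puncturedCone (simplexBouquet S a) ≃ₕ Z) := by
  have := Fintype.ofFinite S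
  have hcard : Fintype.card S = m := by rw [← Nat.card_eq_fintype_card, Nat.card_coe_set_eq, hS]
  exact (isGluing_bouquetChart ha hinj).nonempty_homotopyEquiv hr
    (homotopyEquivalentPairs_orthant_spherePt hm hcard)

end Bouquet

section Cycle

variable {V : Type*}

/-- The sets of vertices that miss a vertex of `S` or an edge of the cycle `s`. Up to homotopy this
is the theta complex of the cycle suspended `|S|` times: it is the boundary of the simplex on `S`
joined with a full simplex, united with the simplex on `S` joined with the theta complex. -/
def cycleComplex (S : Set V) (s : Cycle V) : LowerSet (Set V) where
  carrier := {σ | σ ⊆ S ∪ {u | u ∈ s} ∧ ¬(S ⊆ σ ∧ s.Chain fun u v => u ∈ σ ∨ v ∈ σ)}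
  lower' _ _ hτσ hσ := ⟨hτσ.trans hσ.1, fun h => hσ.2
    ⟨h.1.trans hτσ, h.2.imp fun _ _ => Or.imp (@hτσ _) (@hτσ _)⟩⟩

theorem mem_cycleComplex {S σ : Set V} {s : Cycle V} : σ ∈ cycleComplex S s ↔
    σ ⊆ S ∪ {u | u ∈ s} ∧ ¬(S ⊆ σ ∧ s.Chain fun u v => u ∈ σ ∨ v ∈ σ) :=
  Iff.rfl

theorem mem_cycleComplex_coe_cons {S σ : Set V} {a : V} {l : List V} :
    σ ∈ cycleComplex S (a :: l : List V) ↔ σ ⊆ S ∪ {u | u ∈ a :: l} ∧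
      ¬(S ⊆ σ ∧ (a :: (l ++ [a])).IsChain fun u v => u ∈ σ ∨ v ∈ σ) :=
  Iff.rfl

theorem isChain_insert_iff {b : V} {l : List V} (hb : b ∉ l) (σ : Set V) :
    l.IsChain (fun u v => u ∈ insert b σ ∨ v ∈ insert b σ) ↔
      l.IsChain fun u v => u ∈ σ ∨ v ∈ σ :=
  List.IsChain.iff_of_mem_imp fun u v hu hv => by grind

theorem cycleComplex_singleton (S : Set V) (a : V) :
    cycleComplex S ([a] : List V) = simplexBouquet S fun _ : Unit => a := by
  ext σ
  simp [simplexBouquet, mem_cycleComplex_coe_cons, imp.swap]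

theorem nonempty_homotopyEquiv_cycleComplex_singleton {S : Set V} [Finite S] {m : ℕ} (hm : 0 < m)
    (hS : S.ncard = m) {a : V} (ha : a ∉ S) :
    Nonempty (puncturedCone (cycleComplex S ([a] : List V)) ≃ₕ sphereSpace m) := by
  rw [cycleComplex_singleton]
  exact nonempty_homotopyEquiv_puncturedCone_simplexBouquet (fun _ => ha)
    (Function.injective_of_subsingleton _) hm hS (isGluing_snd {spherePt m hm})

theorem mem_simplexBouquet_pair {S σ : Set V} {a b : V} :
    σ ∈ simplexBouquet S ![a, b] ↔
      σ ⊆ S ∪ {a, b} ∧ ¬(a ∈ σ ∧ b ∈ σ) ∧ ¬((a ∈ σ ∨ b ∈ σ) ∧ S ⊆ σ) := by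
  change σ ⊆ S ∪ range ![a, b] ∧ (∀ i j, ![a, b] i ∈ σ → ![a, b] j ∈ σ → i = j) ∧
    (∀ i, ![a, b] i ∈ σ → ¬S ⊆ σ) ↔ _
  simp only [Matrix.range_cons, Matrix.range_empty, Fin.forall_fin_two, Matrix.cons_val_zero,
    Matrix.cons_val_one, union_empty, singleton_union, zero_ne_one, one_ne_zero]
  tauto

variable [Finite V]

/-- The conditions on `σ` that do not involve `b`, `c`, `d` are collected in `Z` and `P`. -/
theorem nonempty_homotopyEquiv_puncturedCone_path {a b c d e : V} (hbcd : [b, c, d].Nodup)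
    (ha : a ∉ [b, c, d]) (he : e ∉ [b, c, d]) {Z D E : LowerSet (Set V)} {P : UpperSet (Set V)}
    (hempty : ∅ ∈ Z) (hZ : ∀ u ∈ [b, c, d], ∀ σ, insert u σ ∈ Z ↔ σ ∈ Z)
    (hP : ∀ u ∈ [b, c, d], ∀ σ, insert u σ ∈ P ↔ σ ∈ P)
    (hE : ∀ σ, σ ∈ E ↔ σ ∈ Z ∧
      ¬(σ ∈ P ∧ (a ∈ σ ∨ b ∈ σ) ∧ (b ∈ σ ∨ c ∈ σ) ∧ (c ∈ σ ∨ d ∈ σ) ∧ (d ∈ σ ∨ e ∈ σ)))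
    (hD : ∀ σ, σ ∈ D ↔ σ ∈ Z ∧ c ∉ σ ∧ ¬(σ ∈ P ∧ (a ∈ σ ∨ e ∈ σ) ∧ b ∈ σ ∧ d ∈ σ)) :
    Nonempty (puncturedCone E ≃ₕ puncturedCone D) := by
  have hlower : ∀ σ τ, τ ⊆ σ → σ ∈ Z → τ ∈ Z := fun _ _ h hσ => Z.lower h hσ
  have hupper : ∀ σ τ, τ ⊆ σ → τ ∈ P → σ ∈ P := fun _ _ h hτ => P.upper h hτ
  have hexists : ∀ p : Set V → Prop, (∀ σ τ, τ ⊆ σ → p σ → p τ) →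
      ∃ K : LowerSet (Set V), ∀ σ, σ ∈ K ↔ p σ := fun p hp => ⟨⟨{σ | p σ}, hp⟩, fun _ => Iff.rfl⟩
  -- `T` and `M` are chosen so that toggling `c`, `b` and `d` preserves `T ∖ E`, `T ∖ M` and
  -- `M ∖ D` respectively.
  obtain ⟨T, hT⟩ := hexists (fun σ => σ ∈ Z ∧
    ¬(σ ∈ P ∧ (c ∈ σ ∨ (a ∈ σ ∨ e ∈ σ) ∧ b ∈ σ ∧ d ∈ σ) ∧
      (a ∈ σ ∧ e ∈ σ ∨ a ∈ σ ∧ d ∈ σ ∨ b ∈ σ ∧ e ∈ σ))) (by grind)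
  obtain ⟨M, hM⟩ := hexists (fun σ => σ ∈ Z ∧
    ¬(σ ∈ P ∧ (c ∈ σ ∨ (a ∈ σ ∨ e ∈ σ) ∧ b ∈ σ ∧ d ∈ σ) ∧ (a ∈ σ ∨ b ∈ σ ∧ e ∈ σ))) (by grind)
  simp only [List.nodup_cons, List.mem_cons, List.not_mem_nil, or_false] at *
  obtain ⟨f⟩ : Nonempty (puncturedCone T ≃ₕ puncturedCone E) :=
    nonempty_homotopyEquiv_puncturedCone_of_toggle c (fun σ (_ : σ ∈ E) => show σ ∈ T by grind)
      (by grind) (by grind)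
  obtain ⟨g⟩ : Nonempty (puncturedCone T ≃ₕ puncturedCone M) :=
    nonempty_homotopyEquiv_puncturedCone_of_toggle b (fun σ (_ : σ ∈ M) => show σ ∈ T by grind)
      (by grind) (by grind)
  obtain ⟨h⟩ : Nonempty (puncturedCone M ≃ₕ puncturedCone D) :=
    nonempty_homotopyEquiv_puncturedCone_of_toggle d (fun σ (_ : σ ∈ D) => show σ ∈ M by grind)
      (by grind) (by grind)
  exact ⟨f.symm.trans (g.trans h)⟩

theorem nonempty_homotopyEquiv_cycleComplex_contract {S : Set V} {a b c d : V} {l : List V}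
    (hl : (a :: b :: c :: d :: l).Nodup) (hS : ∀ u ∈ a :: b :: c :: d :: l, u ∉ S) :
    Nonempty (puncturedCone (cycleComplex S (a :: b :: c :: d :: l : List V)) ≃ₕ
      puncturedCone (cycleComplex (insert b (insert d S)) (a :: l : List V))) := by
  obtain ⟨e, l', he⟩ : ∃ e l', l ++ [a] = e :: l' := List.exists_cons_of_ne_nil (by simp)
  have hel : e ∈ l ++ [a] := by simp [he]
  have hins : ∀ u ∈ [b, c, d], u ∉ S ∧ u ∉ l ++ [a] := by grind
  obtain ⟨P, hP⟩ : ∃ P : UpperSet (Set V), ∀ σ, σ ∈ P ↔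
      S ⊆ σ ∧ (l ++ [a]).IsChain fun u v => u ∈ σ ∨ v ∈ σ :=
    ⟨⟨{σ | S ⊆ σ ∧ (l ++ [a]).IsChain fun u v => u ∈ σ ∨ v ∈ σ}, fun σ τ hστ hσ =>
      ⟨hσ.1.trans hστ, hσ.2.imp fun _ _ => Or.imp (@hστ _) (@hστ _)⟩⟩, fun _ => Iff.rfl⟩
  refine nonempty_homotopyEquiv_puncturedCone_path (a := a) (b := b) (c := c) (d := d) (e := e)
    (Z := LowerSet.Iic (S ∪ {u | u ∈ a :: b :: c :: d :: l})) (P := P)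
    (by grind) (by grind) (by grind) (empty_subset _) (fun u hu σ => ?_) (fun u hu σ => ?_)
    (fun σ => ?_) (fun σ => ?_)
  · rw [LowerSet.mem_Iic_iff, LowerSet.mem_Iic_iff]
    grind
  · rw [hP, hP, subset_insert_iff_of_notMem (hins u hu).1, isChain_insert_iff (hins u hu).2 σ]
  · simp only [mem_cycleComplex_coe_cons, LowerSet.mem_Iic_iff, hP, he,
      List.cons_append, List.isChain_cons_cons]
    tauto
  · have hsupp : σ ⊆ insert b (insert d S) ∪ {u | u ∈ a :: l} ↔
        σ ⊆ S ∪ {u | u ∈ a :: b :: c :: d :: l} ∧ c ∉ σ := by grind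
    simp only [mem_cycleComplex_coe_cons, LowerSet.mem_Iic_iff, hP, he, hsupp,
      insert_subset_iff, List.isChain_cons_cons, and_assoc]
    refine and_congr_right' (and_congr_right' (not_congr ?_))
    exact ⟨fun ⟨hb, hd, hSσ, hae, hchain⟩ => ⟨hSσ, hchain, hae, hb, hd⟩,
      fun ⟨hSσ, hchain, hae, hb, hd⟩ => ⟨hb, hd, hSσ, hae, hchain⟩⟩

theorem exists_homotopyEquiv_cycleComplex_length_eq {r : ℕ} (hr : 0 < r) (j : ℕ) {S : Set V}
    {l : List V} (hl : l.Nodup) (hS : ∀ u ∈ l, u ∉ S) (hlen : l.length = r + 3 * j) :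
    ∃ (S' : Set V) (l' : List V), l'.Nodup ∧ (∀ u ∈ l', u ∉ S') ∧ l'.length = r ∧
      S'.ncard = S.ncard + 2 * j ∧
      Nonempty (puncturedCone (cycleComplex S l) ≃ₕ puncturedCone (cycleComplex S' l')) := by
  induction j generalizing S l with
  | zero => exact ⟨S, l, hl, hS, by simpa using hlen, rfl, ⟨.refl _⟩⟩
  | succ j ih =>
    obtain ⟨a, b, c, d, l, rfl⟩ : ∃ a b c d l₀, l = a :: b :: c :: d :: l₀ := by
      match l with
      | a :: b :: c :: d :: l₀ => exact ⟨a, b, c, d, l₀, rfl⟩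
      | [] | [_] | [_, _] | [_, _, _] => simp at hlen <;> omega
    obtain ⟨S', l', hl', hS', hlen', hcard, ⟨f⟩⟩ :=
      ih (S := insert b (insert d S)) (l := a :: l) (by grind) (by grind) (by grind)
    obtain ⟨g⟩ := nonempty_homotopyEquiv_cycleComplex_contract hl hS
    refine ⟨S', l', hl', hS', hlen', ?_, ⟨g.trans f⟩⟩
    rw [hcard, ncard_insert_of_notMem (by grind), ncard_insert_of_notMem (by grind)]
    ring

variable {S : Set V} {m : ℕ}

theorem nonempty_homotopyEquiv_cycleComplex_pair (hm : 0 < m) (hS : S.ncard = m) {a b : V}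
    (hab : a ≠ b) (ha : a ∉ S) (hb : b ∉ S) :
    Nonempty (puncturedCone (cycleComplex S ([a, b] : List V)) ≃ₕ sphereSpace m) := by
  have hpair : ∀ σ, σ ∈ cycleComplex S ([a, b] : List V) ↔
      σ ⊆ S ∪ {a, b} ∧ ¬(S ⊆ σ ∧ (a ∈ σ ∨ b ∈ σ)) := fun σ => by
    rw [mem_cycleComplex_coe_cons, show {u | u ∈ [a, b]} = {a, b} by ext; simp]
    simp [or_comm (a := b ∈ σ)]
  have hsingleton : ∀ σ, σ ∈ cycleComplex S ([a] : List V) ↔ σ ⊆ S ∪ {a} ∧ ¬(S ⊆ σ ∧ a ∈ σ) :=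
    fun σ => by simp [mem_cycleComplex_coe_cons]
  obtain ⟨f⟩ : Nonempty (puncturedCone (cycleComplex S ([a, b] : List V)) ≃ₕ
      puncturedCone (cycleComplex S ([a] : List V))) :=
    nonempty_homotopyEquiv_puncturedCone_of_toggle a
      (fun σ hσ => (hpair σ).2 (by have := (hsingleton σ).1 hσ; grind))
      ((hsingleton ∅).2 (by simp))
      (fun σ => by rw [hpair, hpair, hsingleton, hsingleton]; grind)
  obtain ⟨g⟩ := nonempty_homotopyEquiv_cycleComplex_singleton hm hS ha
  exact ⟨f.trans g⟩

theorem nonempty_homotopyEquiv_cycleComplex_triple (hm : 0 < m) (hS : S.ncard + 1 = m) {a b c : V}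
    (habc : [a, b, c].Nodup) (habcS : ∀ u ∈ [a, b, c], u ∉ S) :
    Nonempty (puncturedCone (cycleComplex S ([a, b, c] : List V)) ≃ₕ
      Wedge (Fin 2) (sphereSpace m) (spherePt m hm)) := by
  have hac : a ≠ c := by grind
  have htriple : ∀ σ, σ ∈ cycleComplex S ([a, b, c] : List V) ↔ σ ⊆ S ∪ {a, b, c} ∧
      ¬(S ⊆ σ ∧ (a ∈ σ ∨ b ∈ σ) ∧ (b ∈ σ ∨ c ∈ σ) ∧ (c ∈ σ ∨ a ∈ σ)) := fun σ => by
    rw [mem_cycleComplex_coe_cons, show {u | u ∈ [a, b, c]} = {a, b, c} by ext; simp]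
    simp
  obtain ⟨f⟩ : Nonempty (puncturedCone (cycleComplex S ([a, b, c] : List V)) ≃ₕ
      puncturedCone (simplexBouquet (insert b S) ![a, c])) :=
    nonempty_homotopyEquiv_puncturedCone_of_toggle b
      (fun σ hσ => (htriple σ).2 (by have := mem_simplexBouquet_pair.1 hσ; grind))
      (mem_simplexBouquet_pair.2 (by simp))
      (fun σ => by rw [htriple, htriple, mem_simplexBouquet_pair, mem_simplexBouquet_pair]; grind)
  obtain ⟨g⟩ := nonempty_homotopyEquiv_puncturedCone_simplexBouquet
    (S := insert b S) (a := ![a, c])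
    (Fin.forall_fin_two.2 ⟨show a ∉ insert b S by grind, show c ∉ insert b S by grind⟩)
    (injective_pair_iff_ne.2 hac) hm (by rw [ncard_insert_of_notMem (by grind), hS])
    (isGluing_wedge (spherePt m hm))
  exact ⟨f.trans g⟩

theorem chain_map_natCast_range_iff {n : ℕ} [NeZero n] {r : ZMod n → ZMod n → Prop} :
    (((List.range n).map Nat.cast : List (ZMod n)) : Cycle (ZMod n)).Chain r ↔
      ∀ i, r i (i + 1) := by
  obtain ⟨m, rfl⟩ := Nat.exists_eq_succ_of_ne_zero (NeZero.ne n)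
  have hlast : (m : ZMod (m + 1)) + 1 = (0 : ℕ) := by exact_mod_cast ZMod.natCast_self (m + 1)
  rw [← Cycle.map_coe, Cycle.chain_map, Cycle.chain_range_succ, ← hlast]
  refine ⟨fun ⟨hm, hlt⟩ i => ?_, fun h => ⟨h m, fun k _ => by simpa using h k⟩⟩
  obtain ⟨k, hk, rfl⟩ : ∃ k < m + 1, (k : ZMod (m + 1)) = i :=
    ⟨i.val, i.val_lt, ZMod.natCast_zmod_val i⟩
  rcases (Nat.lt_succ_iff.1 hk).lt_or_eq with hkm | rfl
  · simpa using hlt k hkm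
  · exact hm

theorem thetaComplex_cycleEdges {n : ℕ} [NeZero n] :
    thetaComplex (cycleEdges n) = {σ : Finset (ZMod n) | σ.Nonempty ∧
      (σ : Set (ZMod n)) ∈ cycleComplex ∅ ((List.range n).map Nat.cast : List (ZMod n))} := by
  have hvertex : ∀ u : ZMod n, u ∈ (List.range n).map Nat.cast := fun u => by
    simpa using ⟨u.val, u.val_lt, ZMod.natCast_zmod_val u⟩
  ext σ
  refine and_congr_right fun _ => ?_
  simp only [mem_cycleComplex, chain_map_natCast_range_iff, Cycle.mem_coe_iff, hvertex]
  constructor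
  · rintro ⟨_, ⟨i, rfl⟩, hi⟩
    exact ⟨fun _ _ => .inr trivial, fun ⟨_, h⟩ => by have := h i; grind⟩
  · rintro ⟨-, h⟩
    obtain ⟨i, hi⟩ := not_forall.1 fun hall => h ⟨empty_subset _, hall⟩
    exact ⟨_, ⟨i, rfl⟩, by grind⟩

theorem exists_homotopyEquiv_thetaComplex_cycleEdges {n r j : ℕ} (hr : 0 < r)
    (hn : n = r + 3 * j) :
    ∃ (S : Set (ZMod n)) (l : List (ZMod n)), l.Nodup ∧ (∀ u ∈ l, u ∉ S) ∧ l.length = r ∧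
      S.ncard = 2 * j ∧
      Nonempty (geomReal (thetaComplex (cycleEdges n)) ≃ₕ puncturedCone (cycleComplex S l)) := by
  have : NeZero n := ⟨by omega⟩
  have hnodup : ((List.range n).map Nat.cast : List (ZMod n)).Nodup :=
    List.nodup_range.map_on fun x hx y hy h =>
      (CharP.natCast_injOn_Iio (ZMod n) n) (List.mem_range.1 hx) (List.mem_range.1 hy) h
  obtain ⟨S, l, hl, hS, hlen, hcard, ⟨g⟩⟩ :=
    exists_homotopyEquiv_cycleComplex_length_eq hr j (S := ∅) hnodup (by simp) (by simpa using hn)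
  obtain ⟨f⟩ := nonempty_homotopyEquiv_geomReal_puncturedCone
    (cycleComplex (∅ : Set (ZMod n)) ((List.range n).map Nat.cast : List (ZMod n)))
  rw [← thetaComplex_cycleEdges] at f
  exact ⟨S, l, hl, hS, hlen, by simpa using hcard, ⟨f.trans g⟩⟩

end Cycle

/-- For `n ≥ 3`, `Θ(P_n)` is homotopy equivalent to a wedge of
two copies of `S^{2k-2}` if `n = 3k`, and to `S^{2k-1}` if `n = 3k+1` or
`n = 3k+2`.  (Here `S^{d-1}` is the unit sphere in `ℝ^d`.) -/
theorem theta_cycle_graph (n k : ℕ) (hn : 3 ≤ n) :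
    (∀ _ : n = 3 * k, Nonempty (ContinuousMap.HomotopyEquiv
      (↥(geomReal (thetaComplex (cycleEdges n))))
      (Wedge (Fin 2) (↥(sphereSpace (2 * k - 1))) (spherePt _ (by omega))))) ∧
    (n = 3 * k + 1 → Nonempty (ContinuousMap.HomotopyEquiv
      (↥(geomReal (thetaComplex (cycleEdges n)))) (↥(sphereSpace (2 * k))))) ∧
    (n = 3 * k + 2 → Nonempty (ContinuousMap.HomotopyEquiv
      (↥(geomReal (thetaComplex (cycleEdges n)))) (↥(sphereSpace (2 * k))))) := by
  have : NeZero n := ⟨by omega⟩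
  refine ⟨fun h => ?_, fun h => ?_, fun h => ?_⟩
  · obtain ⟨S, l, hl, hS, hlen, hcard, ⟨f⟩⟩ :=
      exists_homotopyEquiv_thetaComplex_cycleEdges (n := n) (r := 3) (j := k - 1) (by omega)
        (by omega)
    obtain ⟨a, b, c, rfl⟩ := List.length_eq_three.1 hlen
    exact (nonempty_homotopyEquiv_cycleComplex_triple _ (by omega) hl hS).map f.trans
  · obtain ⟨S, l, hl, hS, hlen, hcard, ⟨f⟩⟩ :=
      exists_homotopyEquiv_thetaComplex_cycleEdges (n := n) (r := 1) (j := k) (by omega) (by omega)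
    obtain ⟨a, rfl⟩ := List.length_eq_one_iff.1 hlen
    exact (nonempty_homotopyEquiv_cycleComplex_singleton (by omega) hcard (by simpa using hS)).map
      f.trans
  · obtain ⟨S, l, hl, hS, hlen, hcard, ⟨f⟩⟩ :=
      exists_homotopyEquiv_thetaComplex_cycleEdges (n := n) (r := 2) (j := k) (by omega) (by omega)
    obtain ⟨a, b, rfl⟩ := List.length_eq_two.1 hlen
    exact (nonempty_homotopyEquiv_cycleComplex_pair (by omega) hcard (by simpa using hl)
      (by grind) (by grind)).map f.trans
end

section
/- Θ(Cube(3,1)) is homotopy equivalent to a wedge of three copies of the 4-sphere, S⁴ ∨ S⁴ ∨ S⁴. -/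
/-!
The `3`-cube graph is `K₄,₄` with the perfect matching of antipodal vertices removed. A point of
`|Θ|` is therefore a point of the join `∂Δ³ * ∂Δ³ ≅ S⁵`, the two factors being spanned by the even
and the odd vertices, that vanishes at a vertex `i` of the first and a vertex `j ≠ i` of the second
factor. So `|Θ|` is `S⁵` without the four open facets that miss an antipodal pair. Pushing away from
the facet centres, it is up to homotopy `ℝ⁶` without the four rays through these centres, and a
piecewise linear change of coordinates moves the rays to the half-axes of a plane in `ℝ² × ℝ⁴`.
What remains over the origin of `ℝ⁴` are the four open quadrants of the plane: the complement of the
rays is the suspension of `S³` with four cone points instead of two, a wedge of three `4`-spheres.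
-/

section Homotopies

theorem homotopic_of_segment_subset {Z E : Type*} [TopologicalSpace Z] [AddCommGroup E]
    [Module ℝ E] [TopologicalSpace E] [IsTopologicalAddGroup E] [ContinuousSMul ℝ E]
    {s : Set E} {F G : C(Z, s)} (h : ∀ z, segment ℝ (F z : E) (G z) ⊆ s) : F.Homotopic G :=
  ⟨{ toFun := fun x => ⟨AffineMap.lineMap (F x.2 : E) (G x.2 : E) (x.1 : ℝ), h x.2 <| by
        rw [segment_eq_image_lineMap]
        exact Set.mem_image_of_mem _ x.1.2⟩
     continuous_toFun := by
       simp only [AffineMap.lineMap_apply_module]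
       fun_prop
     map_zero_left := fun z => by simp
     map_one_left := fun z => by simp }⟩

variable {E : Type*} [NormedAddCommGroup E] [NormedSpace ℝ E]

/-- Radial projection of the complement of the origin onto the unit sphere. -/
noncomputable def radialProj : C({v : E // v ≠ 0}, Metric.sphere (0 : E) 1) where
  toFun v := ⟨NormedSpace.normalize v.1, by simpa using v.2⟩
  continuous_toFun := by
    refine (Continuous.smul (Continuous.inv₀ ?_ fun v => norm_ne_zero_iff.2 v.2) ?_).subtype_mk _
    · fun_prop
    · fun_prop

theorem radialProj_coe (v : E) (hv : v ≠ 0) :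
    (radialProj ⟨v, hv⟩ : E) = NormedSpace.normalize v := rfl

theorem radialProj_of_mem_sphere {v : Metric.sphere (0 : E) 1} {w : E} (hw : w ≠ 0)
    (h : w = v) : radialProj ⟨w, hw⟩ = v := by
  subst h
  exact Subtype.ext (NormedSpace.normalize_eq_self_of_norm_eq_one (norm_eq_of_mem_sphere v))

theorem lineMap_ne_zero_of_ne_neg {x y : E} (hx : ‖x‖ = 1) (hy : ‖y‖ = 1) (hxy : x ≠ -y)
    (t : unitInterval) : AffineMap.lineMap x y (t : ℝ) ≠ 0 := by
  intro h
  rw [AffineMap.lineMap_apply_module, add_eq_zero_iff_eq_neg] at h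
  have ht : 1 - (t : ℝ) = t := by
    simpa [norm_smul, hx, hy, abs_of_nonneg t.2.1, abs_of_nonneg (sub_nonneg.2 t.2.2)]
      using congrArg norm h
  have ht0 : (t : ℝ) ≠ 0 := by
    intro h0
    simp [h0] at ht
  rw [ht, ← smul_neg] at h
  exact hxy (smul_right_injective E ht0 h)

theorem homotopicRel_of_ne_neg {Z : Type*} [TopologicalSpace Z]
    {f g : C(Z, Metric.sphere (0 : E) 1)} {S : Set Z} (h : ∀ z, (f z : E) ≠ -g z)
    (hS : Set.EqOn f g S) : f.HomotopicRel g S := by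
  have hne (x : unitInterval × Z) : AffineMap.lineMap (f x.2 : E) (g x.2 : E) (x.1 : ℝ) ≠ 0 :=
    lineMap_ne_zero_of_ne_neg (norm_eq_of_mem_sphere _) (norm_eq_of_mem_sphere _) (h x.2) x.1
  exact ⟨{
    toFun := fun x => radialProj ⟨_, hne x⟩
    continuous_toFun := by
      refine radialProj.continuous.comp (Continuous.subtype_mk (p := (· ≠ 0)) ?_ hne)
      simp only [AffineMap.lineMap_apply_module]
      fun_prop
    map_zero_left := fun z => radialProj_of_mem_sphere _ (by simp)
    map_one_left := fun z => radialProj_of_mem_sphere _ (by simp)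
    prop' := fun t z hz => radialProj_of_mem_sphere _ (by simp [hS hz]) }⟩

end Homotopies

section Sphere

variable {d : ℕ}

theorem toLp_cons_zero (c : ℝ) :
    (WithLp.toLp 2 (Fin.cons c 0) : EuclideanSpace ℝ (Fin (d + 1))) =
      c • (spherePt (d + 1) d.succ_pos).1 := by
  ext i
  refine Fin.cases ?_ (fun i => ?_) i <;> simp [spherePt]

theorem eq_or_eq_neg_spherePt {σ : sphereSpace (d + 1)} (h : ∀ i : Fin d, σ.1 i.succ = 0) :
    σ.1 = (spherePt (d + 1) d.succ_pos).1 ∨ σ.1 = -(spherePt (d + 1) d.succ_pos).1 := by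
  have hσ : σ.1 = σ.1 0 • (spherePt (d + 1) d.succ_pos).1 := by
    rw [← toLp_cons_zero]
    ext i
    refine Fin.cases (by simp) (fun i => ?_) i
    simp [h i]
  have habs : |σ.1 0| = 1 := by
    have := norm_eq_of_mem_sphere σ
    rwa [hσ, norm_smul, norm_eq_of_mem_sphere (spherePt (d + 1) d.succ_pos), mul_one] at this
  rcases eq_or_eq_neg_of_abs_eq habs with h1 | h1 <;> rw [h1] at hσ
  · exact Or.inl (by rw [hσ, one_smul])
  · exact Or.inr (by rw [hσ, neg_one_smul])

end Sphere

namespace Wedge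

variable {ι X Y : Type*} [TopologicalSpace X] [TopologicalSpace Y] {x₀ : X}

/-- The inclusion of the `i`-th copy of `X` into the wedge. -/
def incl (i : ι) : C(X, Wedge ι X x₀) where
  toFun x := Quot.mk _ ⟨i, x⟩
  continuous_toFun := continuous_quot_mk.comp continuous_sigmaMk

theorem incl_basepoint (i j : ι) : (incl i x₀ : Wedge ι X x₀) = incl j x₀ :=
  Quot.sound ⟨rfl, rfl⟩

/-- The map out of a wedge determined by maps of the copies of `X` that agree at `x₀`. -/
def lift (f : ι → C(X, Y)) (hf : ∀ i j, f i x₀ = f j x₀) : C(Wedge ι X x₀, Y) where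
  toFun := Quot.lift (fun x => f x.1 x.2) (by
    rintro ⟨i, x⟩ ⟨j, y⟩ ⟨rfl, rfl⟩
    exact hf i j)
  continuous_toFun := continuous_quot_lift _ (continuous_sigma fun i => (f i).continuous)

/- The homotopies are glued as maps into the path space `C(unitInterval, Y)`, which avoids comparing
the topology of `unitInterval × Wedge ι X x₀` with a quotient topology. -/
theorem homotopic_of_homotopicRel {f g : C(Wedge ι X x₀, Y)}
    (h : ∀ i, (f.comp (incl i)).HomotopicRel (g.comp (incl i)) {x₀}) : f.Homotopic g := by
  let H i := (h i).some
  let path i : C(X, C(unitInterval, Y)) := ((H i).toContinuousMap.comp ContinuousMap.prodSwap).curry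
  have path_zero i x : path i x 0 = f (incl i x) := (H i).apply_zero x
  have path_one i x : path i x 1 = g (incl i x) := (H i).apply_one x
  have path_basepoint i t : path i x₀ t = f (incl i x₀) := (H i).eq_fst t rfl
  let paths : C(Wedge ι X x₀, C(unitInterval, Y)) := lift path fun i j => by
    ext t
    rw [path_basepoint, path_basepoint, incl_basepoint i j]
  exact ⟨{
    toFun := fun x => paths x.2 x.1
    continuous_toFun := by fun_prop
    map_zero_left := by
      rintro ⟨i, x⟩
      exact path_zero i x
    map_one_left := by
      rintro ⟨i, x⟩
      exact path_one i x }⟩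

end Wedge

/-- A family of pairwise disjoint open convex cones of `V`, none of them containing the origin,
with a point chosen in each. -/
structure ConicSectors (ι V : Type*) [NormedAddCommGroup V] [NormedSpace ℝ V] where
  sector : ι → ConvexCone ℝ V
  isOpen_sector : ∀ i, IsOpen (sector i : Set V)
  zero_notMem_sector : ∀ i, (0 : V) ∉ sector i
  eq_of_mem_sector : ∀ {i j v}, v ∈ sector i → v ∈ sector j → i = j
  point : ι → V
  point_mem : ∀ i, point i ∈ sector i

namespace ConicSectors

section SectorSpace

variable {ι V : Type*} [NormedAddCommGroup V] [NormedSpace ℝ V] (O : ConicSectors ι V)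

/-- The space `V × ℝᵈ` with the complement of the sectors in `V × {0}` removed. -/
def sectorSpace (d : ℕ) : Set (V × (Fin d → ℝ)) :=
  {p | p.2 = 0 → ∃ i, p.1 ∈ O.sector i}

variable {O} in
theorem homotopic_of_sameSector {Z : Type*} [TopologicalSpace Z] {d : ℕ}
    {F G : C(Z, O.sectorSpace d)}
    (hsmul : ∀ z, ∃ c : ℝ, 0 ≤ c ∧ (G z).1.2 = c • (F z).1.2)
    (hsector : ∀ z, (F z).1.2 = 0 → ∃ i, (F z).1.1 ∈ O.sector i ∧ (G z).1.1 ∈ O.sector i) :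
    F.Homotopic G := by
  refine homotopic_of_segment_subset ?_
  rintro z _ ⟨a, b, ha, hb, hab, rfl⟩ h0
  obtain ⟨c, hc, hG⟩ := hsmul z
  have h0' : (a + b * c) • (F z).1.2 = 0 := by
    simpa [hG, smul_smul, add_smul] using h0
  rcases smul_eq_zero.1 h0' with hcoeff | hF
  · have ha0 : a = 0 := by nlinarith [mul_nonneg hb hc]
    obtain rfl : b = 1 := by linarith
    subst ha0
    simpa using (G z).2 (by simpa using h0)
  · obtain ⟨i, hFi, hGi⟩ := hsector z hF
    exact ⟨i, (O.sector i).convex hFi hGi ha hb hab⟩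

/-- The distance from `v` to the complement of the `i`-th sector: a continuous function, positive
exactly on that sector. -/
noncomputable def depth (i : ι) (v : V) : ℝ :=
  Metric.infDist v (O.sector i : Set V)ᶜ

theorem depth_pos_iff {i : ι} {v : V} : 0 < O.depth i v ↔ v ∈ O.sector i := by
  have hne : ((O.sector i : Set V)ᶜ).Nonempty := ⟨0, O.zero_notMem_sector i⟩
  rw [depth, ← (O.isOpen_sector i).isClosed_compl.notMem_iff_infDist_pos hne]
  simp

theorem depth_eq_zero {i : ι} {v : V} (h : v ∉ O.sector i) : O.depth i v = 0 :=
  Metric.infDist_zero_of_mem h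

theorem depth_nonneg (i : ι) (v : V) : 0 ≤ O.depth i v :=
  Metric.infDist_nonneg

@[fun_prop]
theorem continuous_depth (i : ι) : Continuous (O.depth i) :=
  Metric.continuous_infDist_pt _

theorem sum_depth_eq [Fintype ι] {i : ι} {v : V} (h : v ∈ O.sector i) :
    ∑ j, O.depth j v = O.depth i v :=
  Finset.sum_eq_single_of_mem i (Finset.mem_univ i) fun _ _ hj =>
    O.depth_eq_zero fun h' => hj (O.eq_of_mem_sector h' h)

end SectorSpace

section Collapse

variable {κ V : Type*} [Fintype κ] [NormedAddCommGroup V] [NormedSpace ℝ V]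
  (O : ConicSectors (Option κ) V) {d : ℕ}

/-- A vector of `ℝ^(d+1)` whose direction is, for `y = 0`, the second pole if `v` lies in the
sector `some k` and the first pole if it lies in another sector. -/
noncomputable def collapseVec (k : κ) (p : V × (Fin d → ℝ)) : EuclideanSpace ℝ (Fin (d + 1)) :=
  WithLp.toLp 2 (Fin.cons
    (‖p.2‖ + ∑ i, O.depth i p.1 - 2 * O.depth (some k) p.1) (O.depth (some k) p.1 • p.2))

theorem collapseVec_of_notMem {k : κ} {p : V × (Fin d → ℝ)} (h : p.1 ∉ O.sector (some k)) :
    O.collapseVec k p =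
      (‖p.2‖ + ∑ i, O.depth i p.1) • (spherePt (d + 1) d.succ_pos).1 := by
  rw [← toLp_cons_zero, collapseVec, O.depth_eq_zero h]
  simp

theorem collapseVec_of_mem {k : κ} {p : V × (Fin d → ℝ)} (h : p.1 ∈ O.sector (some k))
    (hp : p.2 = 0) :
    O.collapseVec k p = (-O.depth (some k) p.1) • (spherePt (d + 1) d.succ_pos).1 := by
  rw [← toLp_cons_zero, collapseVec, O.sum_depth_eq h, hp]
  congr 2
  · simp only [norm_zero]; ring
  · simp

theorem norm_add_sum_depth_pos {p : V × (Fin d → ℝ)} (hp : p ∈ O.sectorSpace d) :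
    0 < ‖p.2‖ + ∑ i, O.depth i p.1 := by
  have hsum : 0 ≤ ∑ i, O.depth i p.1 := Finset.sum_nonneg fun i _ => O.depth_nonneg i p.1
  by_cases h : p.2 = 0
  · obtain ⟨i, hi⟩ := hp h
    simpa [h, O.sum_depth_eq hi, O.depth_pos_iff] using hi
  · exact add_pos_of_pos_of_nonneg (norm_pos_iff.2 h) hsum

theorem collapseVec_ne_zero (k : κ) {p : V × (Fin d → ℝ)} (hp : p ∈ O.sectorSpace d) :
    O.collapseVec k p ≠ 0 := by
  have hpt : (spherePt (d + 1) d.succ_pos).1 ≠ 0 := by simp [spherePt]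
  by_cases hk : p.1 ∈ O.sector (some k)
  · have hdepth := O.depth_pos_iff.2 hk
    by_cases h0 : p.2 = 0
    · rw [O.collapseVec_of_mem hk h0]
      exact smul_ne_zero (neg_ne_zero.2 hdepth.ne') hpt
    · intro h
      refine smul_ne_zero hdepth.ne' h0 (funext fun i => ?_)
      simpa [collapseVec] using congrArg (fun u => u.ofLp i.succ) h
  · rw [O.collapseVec_of_notMem hk]
    exact smul_ne_zero (O.norm_add_sum_depth_pos hp).ne' hpt

/-- The map of the sector space to the `k`-th sphere that sends everything outside the sector
`some k` to the base point. -/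
noncomputable def collapse (k : κ) : C(O.sectorSpace d, sphereSpace (d + 1)) :=
  radialProj.comp
    { toFun := fun p => ⟨O.collapseVec k p.1, O.collapseVec_ne_zero k p.2⟩
      continuous_toFun := by
        refine Continuous.subtype_mk ((PiLp.continuous_toLp 2 _).comp ?_) _
        exact Continuous.finCons (by fun_prop) (by fun_prop) }

theorem collapse_coe (k : κ) (p : O.sectorSpace d) :
    (O.collapse k p).1 = ‖O.collapseVec k p.1‖⁻¹ • O.collapseVec k p.1 := rfl

theorem collapse_of_notMem {k : κ} {p : O.sectorSpace d} (h : p.1.1 ∉ O.sector (some k)) :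
    O.collapse k p = spherePt (d + 1) d.succ_pos := by
  refine Subtype.ext ((radialProj_coe _ _).trans ?_)
  rw [O.collapseVec_of_notMem h, NormedSpace.normalize_smul_of_pos (O.norm_add_sum_depth_pos p.2)]
  exact NormedSpace.normalize_eq_self_of_norm_eq_one (norm_eq_of_mem_sphere _)

theorem collapse_of_mem {k : κ} {p : O.sectorSpace d} (h : p.1.1 ∈ O.sector (some k))
    (hp : p.1.2 = 0) :
    (O.collapse k p).1 = -(spherePt (d + 1) d.succ_pos).1 := by
  refine (radialProj_coe _ _).trans ?_
  rw [O.collapseVec_of_mem h hp,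
    NormedSpace.normalize_smul_of_neg (neg_neg_of_pos (O.depth_pos_iff.2 h)),
    NormedSpace.normalize_eq_self_of_norm_eq_one (norm_eq_of_mem_sphere _)]

theorem collapse_succ (k : κ) (p : O.sectorSpace d) (i : Fin d) :
    (O.collapse k p).1 i.succ =
      ‖O.collapseVec k p.1‖⁻¹ * O.depth (some k) p.1.1 * p.1.2 i := by
  simp [collapse_coe, collapseVec, mul_assoc]

end Collapse

section Wedge

variable {κ V : Type*} [NormedAddCommGroup V] [NormedSpace ℝ V]
  (O : ConicSectors (Option κ) V) {d : ℕ}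

section ToWedge

variable [Fintype κ] [Nonempty κ]

/-- The map to the wedge that applies `collapse k` on the sector `some k` and sends everything
outside these sectors to the base point. -/
noncomputable def toWedge (p : O.sectorSpace d) :
    Wedge κ (sphereSpace (d + 1)) (spherePt (d + 1) d.succ_pos) :=
  let k := Classical.epsilon fun k => p.1.1 ∈ O.sector (some k)
  Wedge.incl k (O.collapse k p)

theorem toWedge_eq {k : κ} {p : O.sectorSpace d} (h : ∀ j, p.1.1 ∈ O.sector (some j) → j = k) :
    O.toWedge p = Wedge.incl k (O.collapse k p) := by
  by_cases hex : ∃ j, p.1.1 ∈ O.sector (some j)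
  · rw [toWedge, h _ (Classical.epsilon_spec hex)]
  · push Not at hex
    dsimp only [toWedge]
    rw [O.collapse_of_notMem (hex _), O.collapse_of_notMem (hex _)]
    exact Wedge.incl_basepoint _ _

theorem continuous_toWedge : Continuous (O.toWedge (d := d)) := by
  let domain (k : κ) : Set (O.sectorSpace d) := {p | ∀ j, j ≠ k → p.1.1 ∉ O.sector (some j)}
  have isClosed_domain k : IsClosed (domain k) := by
    simp only [domain, Set.ofPred_forall]
    refine isClosed_iInter fun j => isClosed_iInter fun _ => ?_
    exact (O.isOpen_sector (some j)).isClosed_compl.preimage (by fun_prop)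
  have iUnion_domain : ⋃ k, domain k = Set.univ := by
    refine Set.eq_univ_of_forall fun p => Set.mem_iUnion.2 ?_
    by_cases hex : ∃ k, p.1.1 ∈ O.sector (some k)
    · obtain ⟨k, hk⟩ := hex
      exact ⟨k, fun j hj hjk => hj (Option.some.inj (O.eq_of_mem_sector hjk hk))⟩
    · push Not at hex
      exact ⟨Classical.arbitrary κ, fun j _ => hex j⟩
  refine (locallyFinite_of_finite domain).continuous iUnion_domain isClosed_domain fun k => ?_
  refine ContinuousOn.congr
    ((Wedge.incl k).comp (O.collapse k)).continuous.continuousOn fun p hp => ?_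
  exact O.toWedge_eq fun j hj => not_imp_comm.1 (hp j) (not_not.2 hj)

end ToWedge

section OfWedge

/-- A path in `V` that runs straight from the chosen point of `some k` to the origin, reached at
`s = 0`, and from there straight to the chosen point of `none`. -/
noncomputable def brokenLine (k : κ) (s : ℝ) : V :=
  max s 0 • O.point none + max (-s) 0 • O.point (some k)

@[fun_prop]
theorem continuous_brokenLine (k : κ) : Continuous (O.brokenLine k) := by
  unfold brokenLine
  fun_prop

theorem brokenLine_one (k : κ) : O.brokenLine k 1 = O.point none := by
  simp [brokenLine]

theorem brokenLine_neg_one (k : κ) : O.brokenLine k (-1) = O.point (some k) := by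
  simp [brokenLine]

theorem eq_of_brokenLine_mem_sector {k j : κ} {s : ℝ}
    (h : O.brokenLine k s ∈ O.sector (some j)) : j = k := by
  rcases lt_trichotomy s 0 with hs | rfl | hs
  · have hmem : O.brokenLine k s ∈ O.sector (some k) := by
      simpa [brokenLine, hs.le] using (O.sector (some k)).smul_mem (neg_pos.2 hs) (O.point_mem _)
    exact Option.some.inj (O.eq_of_mem_sector h hmem)
  · simp [brokenLine, O.zero_notMem_sector] at h
  · have hmem : O.brokenLine k s ∈ O.sector none := by
      simpa [brokenLine, hs.le] using (O.sector none).smul_mem hs (O.point_mem _)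
    exact absurd (O.eq_of_mem_sector h hmem) (Option.some_ne_none j)

/-- The `k`-th sphere of the wedge, mapped to the sector space along `brokenLine k`. -/
noncomputable def sphereMap (k : κ) : C(sphereSpace (d + 1), O.sectorSpace d) where
  toFun σ := ⟨(O.brokenLine k (σ.1 0), fun i => σ.1 i.succ), fun h => by
    rcases eq_or_eq_neg_spherePt fun i => congrFun h i with hσ | hσ
    · exact ⟨none, by simpa [hσ, spherePt, brokenLine_one] using O.point_mem none⟩
    · exact ⟨some k, by simpa [hσ, spherePt, brokenLine_neg_one] using O.point_mem (some k)⟩⟩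
  continuous_toFun := by fun_prop

theorem sphereMap_of_eq_spherePt {k : κ} {σ : sphereSpace (d + 1)}
    (hσ : σ.1 = (spherePt (d + 1) d.succ_pos).1) : (O.sphereMap k σ).1 = (O.point none, 0) := by
  ext <;> simp [sphereMap, hσ, spherePt, brokenLine_one]

theorem sphereMap_of_eq_neg_spherePt {k : κ} {σ : sphereSpace (d + 1)}
    (hσ : σ.1 = -(spherePt (d + 1) d.succ_pos).1) :
    (O.sphereMap k σ).1 = (O.point (some k), 0) := by
  ext <;> simp [sphereMap, hσ, spherePt, brokenLine_neg_one]

/-- The homotopy inverse of `toWedge`, given by `sphereMap k` on the `k`-th sphere. -/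
noncomputable def ofWedge :
    C(Wedge κ (sphereSpace (d + 1)) (spherePt (d + 1) d.succ_pos), O.sectorSpace d) :=
  Wedge.lift O.sphereMap fun i j => Subtype.ext <| by
    rw [O.sphereMap_of_eq_spherePt rfl, O.sphereMap_of_eq_spherePt rfl]

end OfWedge

variable [Fintype κ]

theorem collapse_sphereMap_spherePt (k : κ) :
    O.collapse k (O.sphereMap (d := d) k (spherePt (d + 1) d.succ_pos)) =
      spherePt (d + 1) d.succ_pos := by
  refine O.collapse_of_notMem fun h => ?_
  rw [O.sphereMap_of_eq_spherePt rfl] at h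
  exact Option.some_ne_none k (O.eq_of_mem_sector h (O.point_mem none))

theorem collapse_sphereMap_ne_neg (k : κ) (σ : sphereSpace (d + 1)) :
    (O.collapse k (O.sphereMap k σ)).1 ≠ -σ.1 := by
  intro h
  have htail (i : Fin d) : σ.1 i.succ = 0 := by
    set c := ‖O.collapseVec k (O.sphereMap k σ).1‖⁻¹ * O.depth (some k) (O.sphereMap k σ).1.1
    have hc : 0 ≤ c := mul_nonneg (by positivity) (O.depth_nonneg _ _)
    have hi : c * σ.1 i.succ = -σ.1 i.succ := by
      rw [← PiLp.neg_apply, ← h]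
      exact (O.collapse_succ k (O.sphereMap k σ) i).symm
    exact (mul_eq_zero.1 (by linarith : (c + 1) * σ.1 i.succ = 0)).resolve_left (by positivity)
  have hself : (O.collapse k (O.sphereMap k σ)).1 = σ.1 := by
    rcases eq_or_eq_neg_spherePt htail with hσ | hσ
    · rw [show σ = spherePt (d + 1) d.succ_pos from Subtype.ext hσ,
        O.collapse_sphereMap_spherePt]
    · have hmap := O.sphereMap_of_eq_neg_spherePt (k := k) hσ
      rw [hσ, O.collapse_of_mem (by rw [hmap]; exact O.point_mem _) (by rw [hmap])]
  exact ne_neg_of_mem_unit_sphere ℝ σ (Subtype.ext (hself.symm.trans h))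

variable [Nonempty κ]

theorem ofWedge_toWedge_of_mem {k : κ} {p : O.sectorSpace d} (h : p.1.1 ∈ O.sector (some k)) :
    O.ofWedge (O.toWedge p) = O.sphereMap k (O.collapse k p) := by
  rw [O.toWedge_eq fun j hj => Option.some.inj (O.eq_of_mem_sector hj h)]
  rfl

theorem ofWedge_toWedge_of_notMem {p : O.sectorSpace d} (h : ∀ k, p.1.1 ∉ O.sector (some k)) :
    (O.ofWedge (O.toWedge p)).1 = (O.point none, 0) := by
  let k := Classical.arbitrary κ
  rw [O.toWedge_eq (k := k) fun j hj => absurd hj (h j), O.collapse_of_notMem (h k)]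
  exact O.sphereMap_of_eq_spherePt (k := k) rfl

theorem ofWedge_toWedge_homotopic :
    (O.ofWedge.comp ⟨O.toWedge (d := d), O.continuous_toWedge⟩).Homotopic
      (ContinuousMap.id (O.sectorSpace d)) := by
  refine (homotopic_of_sameSector (fun p => ?_) fun p hp => ?_).symm
  · change ∃ c : ℝ, 0 ≤ c ∧ (O.ofWedge (O.toWedge p)).1.2 = c • p.1.2
    by_cases h : ∃ k, p.1.1 ∈ O.sector (some k)
    · obtain ⟨k, hk⟩ := h
      rw [O.ofWedge_toWedge_of_mem hk]
      exact ⟨_, mul_nonneg (by positivity) (O.depth_nonneg _ _), funext (O.collapse_succ k p)⟩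
    · push Not at h
      exact ⟨0, le_rfl, by rw [O.ofWedge_toWedge_of_notMem h, zero_smul]⟩
  · change ∃ i, p.1.1 ∈ O.sector i ∧ (O.ofWedge (O.toWedge p)).1.1 ∈ O.sector i
    obtain ⟨i, hi⟩ := p.2 hp
    refine ⟨i, hi, ?_⟩
    cases i with
    | none =>
      rw [O.ofWedge_toWedge_of_notMem fun k hk =>
        Option.some_ne_none k (O.eq_of_mem_sector hk hi)]
      exact O.point_mem none
    | some k =>
      rw [O.ofWedge_toWedge_of_mem hi, O.sphereMap_of_eq_neg_spherePt (O.collapse_of_mem hi hp)]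
      exact O.point_mem (some k)

theorem toWedge_ofWedge_homotopic :
    (ContinuousMap.comp ⟨O.toWedge (d := d), O.continuous_toWedge⟩ O.ofWedge).Homotopic
      (ContinuousMap.id _) := by
  refine Wedge.homotopic_of_homotopicRel fun k => ?_
  have hmap : ((ContinuousMap.comp ⟨O.toWedge (d := d), O.continuous_toWedge⟩ O.ofWedge).comp
      (Wedge.incl k)) = (Wedge.incl k).comp ((O.collapse k).comp (O.sphereMap k)) :=
    ContinuousMap.ext fun σ => O.toWedge_eq fun j hj => O.eq_of_brokenLine_mem_sector hj
  rw [hmap, ContinuousMap.id_comp]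
  refine ContinuousMap.HomotopicRel.comp_continuousMap
    (f₁ := ContinuousMap.id _) (homotopicRel_of_ne_neg ?_ ?_) (Wedge.incl k)
  · exact O.collapse_sphereMap_ne_neg k
  · rintro _ rfl
    exact O.collapse_sphereMap_spherePt k

/-- The sector space is, up to homotopy, a wedge with one sphere fewer than there are sectors. -/
noncomputable def homotopyEquivWedge :
    ContinuousMap.HomotopyEquiv (O.sectorSpace d)
      (Wedge κ (sphereSpace (d + 1)) (spherePt (d + 1) d.succ_pos)) where
  toFun := ⟨O.toWedge, O.continuous_toWedge⟩
  invFun := O.ofWedge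
  left_inv := O.ofWedge_toWedge_homotopic
  right_inv := O.toWedge_ofWedge_homotopic

end Wedge

end ConicSectors

namespace ThetaCube

section Quadrants

/-- The signs of the two coordinates on each of the four open quadrants. -/
def quadrantSign : Option (Fin 3) → ℝ × ℝ
  | none => (1, 1)
  | some k => ![(-1, 1), (1, -1), (-1, -1)] k

/-- The four open quadrants of the plane. -/
def quadrants : ConicSectors (Option (Fin 3)) (ℝ × ℝ) where
  sector i :=
    { carrier := {v | 0 < v.1 * (quadrantSign i).1 ∧ 0 < v.2 * (quadrantSign i).2}
      smul_mem' := fun c hc v hv => by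
        simpa [mul_assoc, hc] using hv
      add_mem' := fun v hv w hw => by
        simpa [add_mul] using And.intro (add_pos hv.1 hw.1) (add_pos hv.2 hw.2) }
  isOpen_sector i :=
    (isOpen_lt (f := fun _ : ℝ × ℝ => 0) (g := fun v => v.1 * (quadrantSign i).1)
      (by fun_prop) (by fun_prop)).inter
    (isOpen_lt (f := fun _ : ℝ × ℝ => 0) (g := fun v => v.2 * (quadrantSign i).2)
      (by fun_prop) (by fun_prop))
  zero_notMem_sector i := by rintro ⟨h, -⟩; simp at h
  eq_of_mem_sector := by
    have hinj : ∀ i j, 0 < (quadrantSign i).1 * (quadrantSign j).1 →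
        0 < (quadrantSign i).2 * (quadrantSign j).2 → i = j := by
      simp [Option.forall, Fin.forall_fin_succ, quadrantSign]
    have same_sign {x a b : ℝ} (ha : 0 < x * a) (hb : 0 < x * b) : 0 < a * b := by
      nlinarith [mul_pos ha hb, sq_nonneg x]
    intro i j v hi hj
    exact hinj _ _ (same_sign hi.1 hj.1) (same_sign hi.2 hj.2)
  point := quadrantSign
  point_mem i := by
    cases i with
    | none => simp [quadrantSign]
    | some k => fin_cases k <;> simp [quadrantSign]

theorem exists_mem_quadrants_iff {v : ℝ × ℝ} :
    (∃ i, v ∈ quadrants.sector i) ↔ v.1 ≠ 0 ∧ v.2 ≠ 0 := by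
  constructor
  · rintro ⟨i, h1, h2⟩
    exact ⟨left_ne_zero_of_mul h1.ne', left_ne_zero_of_mul h2.ne'⟩
  · rintro ⟨h1, h2⟩
    rcases h1.lt_or_gt with h1 | h1 <;> rcases h2.lt_or_gt with h2 | h2
    · exact ⟨some 2, by simpa [quadrants, quadrantSign] using ⟨h1, h2⟩⟩
    · exact ⟨some 0, by simpa [quadrants, quadrantSign] using ⟨h1, h2⟩⟩
    · exact ⟨some 1, by simpa [quadrants, quadrantSign] using ⟨h1, h2⟩⟩
    · exact ⟨none, by simpa [quadrants, quadrantSign] using ⟨h1, h2⟩⟩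

end Quadrants

section Truncation

variable {ι : Type*} [Fintype ι] [Nontrivial ι]

theorem univ_offDiag_nonempty : (Finset.univ.offDiag : Finset (ι × ι)).Nonempty := by
  obtain ⟨i, j, hij⟩ := exists_pair_ne ι
  exact ⟨(i, j), by simpa using hij⟩

/-- The least height at which truncating `x` creates zeros at some distinct indices of the two
components. -/
noncomputable def level (x : (ι → ℝ) × (ι → ℝ)) : ℝ :=
  Finset.univ.offDiag.inf' univ_offDiag_nonempty
    fun q => max (x.1 q.1) (x.2 q.2)

@[fun_prop]
theorem continuous_level : Continuous (level (ι := ι)) := by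
  unfold level
  exact Continuous.finset_inf'_apply _ fun q _ => by fun_prop

theorem level_le (x : (ι → ℝ) × (ι → ℝ)) {i j : ι} (hij : i ≠ j) :
    level x ≤ max (x.1 i) (x.2 j) :=
  Finset.inf'_le (fun q : ι × ι => max (x.1 q.1) (x.2 q.2)) (by simpa using hij : (i, j) ∈ _)

theorem exists_level_eq (x : (ι → ℝ) × (ι → ℝ)) :
    ∃ i j, i ≠ j ∧ level x = max (x.1 i) (x.2 j) := by
  obtain ⟨⟨i, j⟩, hij, h⟩ := Finset.exists_mem_eq_inf' univ_offDiag_nonempty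
    fun q : ι × ι => max (x.1 q.1) (x.2 q.2)
  exact ⟨i, j, by simpa using hij, h⟩

theorem level_nonneg {x : (ι → ℝ) × (ι → ℝ)} (hx : 0 ≤ x) : 0 ≤ level x := by
  obtain ⟨i, j, -, h⟩ := exists_level_eq x
  exact h ▸ le_max_of_le_left (hx.1 i)

theorem level_eq_zero {x : (ι → ℝ) × (ι → ℝ)} (hx : 0 ≤ x) {i j : ι} (hij : i ≠ j)
    (hi : x.1 i = 0) (hj : x.2 j = 0) : level x = 0 :=
  le_antisymm (by simpa [hi, hj] using level_le x hij) (level_nonneg hx)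

/-- Lower all coordinates of `x` by `level x`, cutting off at `0`. -/
noncomputable def truncate (x : (ι → ℝ) × (ι → ℝ)) : (ι → ℝ) × (ι → ℝ) :=
  (fun i => max (x.1 i - level x) 0, fun i => max (x.2 i - level x) 0)

@[fun_prop]
theorem continuous_truncate : Continuous (truncate (ι := ι)) := by
  unfold truncate
  fun_prop

theorem truncate_nonneg (x : (ι → ℝ) × (ι → ℝ)) : 0 ≤ truncate x :=
  ⟨fun _ => le_max_right _ _, fun _ => le_max_right _ _⟩

theorem truncate_eq_self {x : (ι → ℝ) × (ι → ℝ)} (hx : 0 ≤ x) (h : level x = 0) :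
    truncate x = x := by
  ext i
  · simpa [truncate, h] using hx.1 i
  · simpa [truncate, h] using hx.2 i

theorem exists_truncate_eq_zero (x : (ι → ℝ) × (ι → ℝ)) :
    ∃ i j, i ≠ j ∧ (truncate x).1 i = 0 ∧ (truncate x).2 j = 0 := by
  obtain ⟨i, j, hij, h⟩ := exists_level_eq x
  exact ⟨i, j, hij, by simp [truncate, h], by simp [truncate, h]⟩

end Truncation

section OffDiagJoin

variable {ι : Type*}

/-- The sum of all coordinates. -/
def mass [Fintype ι] (x : (ι → ℝ) × (ι → ℝ)) : ℝ :=
  ∑ i, x.1 i + ∑ i, x.2 i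

variable (ι) in
/-- The boundary of the nonnegative orthant of `ι → ℝ`, the cone over the boundary of the
standard simplex. -/
def orthantBoundary : Set (ι → ℝ) :=
  {A | 0 ≤ A ∧ ∃ i, A i = 0}

variable (ι) in
/-- The union of the simplices of the join of two simplex boundaries that miss a vertex `i` of the
first and a vertex `j ≠ i` of the second factor. -/
def offDiagJoin [Fintype ι] : Set ((ι → ℝ) × (ι → ℝ)) :=
  {x | 0 ≤ x ∧ mass x = 1 ∧ ∃ i j, i ≠ j ∧ x.1 i = 0 ∧ x.2 j = 0}

variable [DecidableEq ι]

/-- Up to scaling, the barycentre of the facet of the join of two simplex boundaries that misses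
the vertex `p` of both factors. -/
def facetCentre (p : ι) : (ι → ℝ) × (ι → ℝ) :=
  (1 - Pi.single p 1, 1 - Pi.single p 1)

theorem facetCentre_nonneg (p : ι) : 0 ≤ facetCentre p := by
  have h : Pi.single p 1 ≤ (1 : ι → ℝ) := fun i => by
    by_cases hi : i = p <;> simp [hi]
  exact ⟨sub_nonneg.2 h, sub_nonneg.2 h⟩

variable (ι) in
/-- The cone over the join of two simplex boundaries, without the rays through the centres of the
facets that miss the same vertex of both factors. -/
def centreRayComplement : Set ((ι → ℝ) × (ι → ℝ)) :=
  {x | x.1 ∈ orthantBoundary ι ∧ x.2 ∈ orthantBoundary ι ∧ ∀ p, ∀ t : ℝ, x ≠ t • facetCentre p}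

theorem smul_mem_centreRayComplement {x : (ι → ℝ) × (ι → ℝ)} (hx : x ∈ centreRayComplement ι)
    {c : ℝ} (hc : 0 < c) : c • x ∈ centreRayComplement ι := by
  obtain ⟨⟨hA, i, hi⟩, ⟨hB, j, hj⟩, hray⟩ := hx
  refine ⟨⟨smul_nonneg hc.le hA, i, by simp [hi]⟩, ⟨smul_nonneg hc.le hB, j, by simp [hj]⟩, ?_⟩
  intro p t h
  exact hray p (c⁻¹ * t) (by rw [mul_smul, ← h, inv_smul_smul₀ hc.ne'])

variable [Fintype ι]

theorem offDiagJoin_subset : offDiagJoin ι ⊆ centreRayComplement ι := by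
  rintro x ⟨⟨hA, hB⟩, hsum, i, j, hij, hi, hj⟩
  refine ⟨⟨hA, i, hi⟩, ⟨hB, j, hj⟩, ?_⟩
  rintro p t rfl
  have ht : t = 0 := by
    by_cases hip : i = p
    · subst hip
      simpa [facetCentre, hij.symm] using hj
    · simpa [facetCentre, hip] using hi
  simp [ht, mass] at hsum

variable [Nontrivial ι]

theorem truncate_add_level_smul {x : (ι → ℝ) × (ι → ℝ)} (hx : 0 ≤ x) {p : ι}
    (hA : x.1 p = 0) (hB : x.2 p = 0) : truncate x + level x • facetCentre p = x := by
  have hlevel := level_nonneg hx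
  ext i <;> by_cases hip : i = p
  · simp [truncate, facetCentre, hip, hA, hlevel]
  · have hle : level x ≤ x.1 i := (level_le x hip).trans_eq (by simpa [hB] using hx.1 i)
    simp [truncate, facetCentre, hip, hle]
  · simp [truncate, facetCentre, hip, hB, hlevel]
  · have hle : level x ≤ x.2 i :=
      (level_le x (Ne.symm hip)).trans_eq (by simpa [hA] using hx.2 i)
    simp [truncate, facetCentre, hip, hle]

theorem truncate_add_smul_mem {x : (ι → ℝ) × (ι → ℝ)} (hx : x ∈ centreRayComplement ι) {p : ι}
    (hA : x.1 p = 0) (hB : x.2 p = 0) {s : ℝ} (hs : 0 ≤ s) :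
    truncate x + s • facetCentre p ∈ centreRayComplement ι := by
  have hx0 : 0 ≤ x := ⟨hx.1.1, hx.2.1.1⟩
  obtain ⟨hy1, hy2⟩ := add_nonneg (truncate_nonneg x) (smul_nonneg hs (facetCentre_nonneg p))
  have hp1 : (truncate x + s • facetCentre p).1 p = 0 := by
    simp [truncate, facetCentre, hA, level_nonneg hx0]
  have hp2 : (truncate x + s • facetCentre p).2 p = 0 := by
    simp [truncate, facetCentre, hB, level_nonneg hx0]
  have hray (t : ℝ) : truncate x + s • facetCentre p ≠ t • facetCentre p := by
    intro h
    refine hx.2.2 p (t - s + level x) ?_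
    rw [add_smul, sub_smul, ← h, add_sub_cancel_right, truncate_add_level_smul hx0 hA hB]
  refine ⟨⟨hy1, p, hp1⟩, ⟨hy2, p, hp2⟩, fun q t h => ?_⟩
  by_cases hqp : p = q
  · exact hray t (hqp ▸ h)
  · have ht : t = 0 := by
      rw [h] at hp1
      simpa [facetCentre, hqp] using hp1
    exact hray 0 (by rw [h, ht, zero_smul, zero_smul])

theorem exists_truncation {x : (ι → ℝ) × (ι → ℝ)} (hx : x ∈ centreRayComplement ι) :
    ∃ p, truncate x + level x • facetCentre p = x ∧
      ∀ s ∈ Set.Icc 0 (level x), truncate x + s • facetCentre p ∈ centreRayComplement ι := by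
  have hx0 : 0 ≤ x := ⟨hx.1.1, hx.2.1.1⟩
  obtain ⟨-, i, hi⟩ := hx.1
  obtain ⟨-, j, hj⟩ := hx.2.1
  by_cases hij : i = j
  · subst hij
    exact ⟨i, truncate_add_level_smul hx0 hi hj, fun s hs =>
      truncate_add_smul_mem hx hi hj hs.1⟩
  · have hlevel := level_eq_zero hx0 hij hi hj
    refine ⟨i, by simp [hlevel, truncate_eq_self hx0 hlevel], fun s hs => ?_⟩
    obtain rfl : s = 0 := by simpa [hlevel] using hs
    simpa [truncate_eq_self hx0 hlevel] using hx

theorem mass_truncate_pos {x : (ι → ℝ) × (ι → ℝ)} (hx : x ∈ centreRayComplement ι) :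
    0 < mass (truncate x) := by
  obtain ⟨p, -, hmem⟩ := exists_truncation hx
  obtain ⟨h1, h2⟩ := truncate_nonneg x
  have hne : truncate x ≠ 0 := by
    simpa using (hmem 0 ⟨le_rfl, level_nonneg ⟨hx.1.1, hx.2.1.1⟩⟩).2.2 p 0
  rcases eq_or_ne (truncate x).1 0 with h | h
  · have h' : (truncate x).2 ≠ 0 := fun h' => hne (Prod.ext h h')
    exact add_pos_of_nonneg_of_pos (Finset.sum_nonneg fun i _ => h1 i)
      (Fintype.sum_pos (lt_of_le_of_ne h2 h'.symm))
  · exact add_pos_of_pos_of_nonneg (Fintype.sum_pos (lt_of_le_of_ne h1 h.symm))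
      (Finset.sum_nonneg fun i _ => h2 i)

theorem inv_mass_smul_truncate_mem {x : (ι → ℝ) × (ι → ℝ)} (hx : x ∈ centreRayComplement ι) :
    (mass (truncate x))⁻¹ • truncate x ∈ offDiagJoin ι := by
  have hpos := mass_truncate_pos hx
  obtain ⟨i, j, hij, hi, hj⟩ := exists_truncate_eq_zero x
  refine ⟨smul_nonneg (inv_nonneg.2 hpos.le) (truncate_nonneg x), ?_, i, j, hij, by simp [hi],
    by simp [hj]⟩
  simp only [mass, Prod.smul_fst, Prod.smul_snd, Pi.smul_apply, smul_eq_mul,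
    ← Finset.mul_sum, ← mul_add]
  exact inv_mul_cancel₀ hpos.ne'

/-- Truncation followed by rescaling to total mass `1`. -/
noncomputable def normalizedTruncate : C(centreRayComplement ι, offDiagJoin ι) where
  toFun x := ⟨_, inv_mass_smul_truncate_mem x.2⟩
  continuous_toFun := by
    have hmass : Continuous (mass (ι := ι)) := by unfold mass; fun_prop
    refine Continuous.subtype_mk (.smul (.inv₀ ?_ fun x => (mass_truncate_pos x.2).ne') ?_) _
    · fun_prop
    · fun_prop

theorem normalizedTruncate_of_mem_offDiagJoin (x : offDiagJoin ι) :
    normalizedTruncate (Set.inclusion offDiagJoin_subset x) = x := by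
  obtain ⟨x, h0, hmass, i, j, hij, hi, hj⟩ := x
  have htrunc : truncate x = x := truncate_eq_self h0 (level_eq_zero h0 hij hi hj)
  refine Subtype.ext ?_
  change (mass (truncate x))⁻¹ • truncate x = x
  rw [htrunc, hmass, inv_one, one_smul]

theorem segment_truncate_subset {x : (ι → ℝ) × (ι → ℝ)} (hx : x ∈ centreRayComplement ι) {r : ℝ}
    (hr : 0 < r) : segment ℝ (r • truncate x) x ⊆ centreRayComplement ι := by
  rintro _ ⟨a, b, ha, hb, hab, rfl⟩
  obtain ⟨p, hp, hmem⟩ := exists_truncation hx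
  have hlevel : 0 ≤ level x := level_nonneg ⟨hx.1.1, hx.2.1.1⟩
  have hc : 0 < a * r + b := by
    rcases hb.eq_or_lt with rfl | hb
    · simpa [show a = 1 by linarith] using hr
    · positivity
  have hs : b * level x / (a * r + b) ∈ Set.Icc 0 (level x) :=
    ⟨by positivity, div_le_of_le_mul₀ hc.le hlevel <| by
      nlinarith [mul_nonneg (mul_nonneg ha hr.le) hlevel]⟩
  convert smul_mem_centreRayComplement (hmem _ hs) hc using 1
  calc a • r • truncate x + b • x
      = a • r • truncate x + b • (truncate x + level x • facetCentre p) := by rw [hp]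
    _ = (a * r + b) • truncate x + (b * level x) • facetCentre p := by module
    _ = _ := by rw [smul_add, smul_smul, mul_div_cancel₀ _ hc.ne']

/-- The homotopy inverse of the inclusion flows along the rays through the facet centres. -/
noncomputable def offDiagJoinHomotopyEquiv :
    ContinuousMap.HomotopyEquiv (offDiagJoin ι) (centreRayComplement ι) where
  toFun := ⟨Set.inclusion offDiagJoin_subset, continuous_inclusion offDiagJoin_subset⟩
  invFun := normalizedTruncate
  left_inv := by
    convert ContinuousMap.Homotopic.refl _ using 1
    exact ContinuousMap.ext fun x => (normalizedTruncate_of_mem_offDiagJoin x).symm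
  right_inv := homotopic_of_segment_subset fun x =>
    segment_truncate_subset x.2 (inv_pos.2 (mass_truncate_pos x.2))

end OffDiagJoin

section Chart

section SubMin

variable {ι : Type*} [Fintype ι] [Nonempty ι]

/-- The representative of `A` modulo constant functions in the boundary of the orthant. -/
noncomputable def subMin (A : ι → ℝ) (i : ι) : ℝ :=
  A i - Finset.univ.inf' Finset.univ_nonempty A

@[fun_prop]
theorem continuous_subMin : Continuous (subMin (ι := ι)) :=
  continuous_pi fun i => (continuous_apply i).sub
    (Continuous.finset_inf'_apply _ fun j _ => continuous_apply j)

theorem subMin_mem_orthantBoundary (A : ι → ℝ) : subMin A ∈ orthantBoundary ι := by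
  obtain ⟨i, -, hi⟩ := Finset.exists_mem_eq_inf' Finset.univ_nonempty A
  exact ⟨fun j => sub_nonneg.2 (Finset.inf'_le A (Finset.mem_univ j)), i, sub_eq_zero.2 hi.symm⟩

theorem subMin_eq {A B : ι → ℝ} {c : ℝ} (hB : B ∈ orthantBoundary ι) (h : ∀ i, A i = B i + c) :
    subMin A = B := by
  obtain ⟨h0, j, hj⟩ := hB
  have hmin : Finset.univ.inf' Finset.univ_nonempty A = c := by
    refine le_antisymm ?_ (Finset.le_inf' _ _ fun i _ => ?_)
    · exact (Finset.inf'_le A (Finset.mem_univ j)).trans_eq (by rw [h, hj, zero_add])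
    · rw [h]
      exact le_add_of_nonneg_left (h0 i)
  ext i
  rw [subMin, hmin, h, add_sub_cancel_right]

end SubMin

/-- A piecewise linear isomorphism from pairs of vectors modulo constants to `ℝ² × ℝ⁴`. It is
chosen so that the classes of `(-Pi.single p 1, 0)` for `p = 0, 1, 2, 3` lie on the four half-axes
of the plane. -/
def planeCoords (C D : Fin 4 → ℝ) : (ℝ × ℝ) × (Fin 4 → ℝ) :=
  ((C 0 - C 1, C 2 - C 3),
    ![max (C 0) (C 1) - max (C 2) (C 3), D 0 - D 3, D 1 - D 3, D 2 - D 3])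

/-- The first component of a section of `planeCoords`. -/
def planeSum (q : (ℝ × ℝ) × (Fin 4 → ℝ)) : Fin 4 → ℝ :=
  ![q.2 0 - max (-q.1.1) 0, q.2 0 - max q.1.1 0, -max (-q.1.2) 0, -max q.1.2 0]

/-- The second component of a section of `planeCoords`. -/
def planeDiff (q : (ℝ × ℝ) × (Fin 4 → ℝ)) : Fin 4 → ℝ :=
  ![q.2 1, q.2 2, q.2 3, 0]

theorem planeCoords_sub_const (C D : Fin 4 → ℝ) (c d : ℝ) :
    planeCoords (fun i => C i - c) (fun i => D i - d) = planeCoords C D := by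
  simp [planeCoords, max_sub_sub_right]

theorem planeCoords_planeSum_planeDiff (q : (ℝ × ℝ) × (Fin 4 → ℝ)) :
    planeCoords (planeSum q) (planeDiff q) = q := by
  have hmax (a c : ℝ) : max (c - max (-a) 0) (c - max a 0) = c := by
    rcases le_total a 0 with h | h <;> simp [h]
  obtain ⟨⟨a, b⟩, y⟩ := q
  have hb : max (-max (-b) 0) (-max b 0) = 0 := by simpa using hmax b 0
  refine Prod.ext (Prod.ext ?_ ?_) (funext fun i => ?_)
  · simp [planeCoords, planeSum]
  · simp [planeCoords, planeSum, neg_add_eq_sub]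
  · fin_cases i <;> simp [planeCoords, planeSum, planeDiff, hmax, hb]

theorem planeSum_planeCoords (C D : Fin 4 → ℝ) (i : Fin 4) :
    planeSum (planeCoords C D) i = C i - max (C 2) (C 3) := by
  have hmax (a b : ℝ) : max (a - b) 0 = max a b - b := by rw [← max_sub_sub_right, sub_self]
  fin_cases i <;> simp [planeSum, planeCoords, hmax, max_comm]

theorem planeDiff_planeCoords (C D : Fin 4 → ℝ) (i : Fin 4) :
    planeDiff (planeCoords C D) i = D i - D 3 := by
  fin_cases i <;> simp [planeDiff, planeCoords]

/-- A chart of the cone over the join of two tetrahedron boundaries. -/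
def planeChart (x : (Fin 4 → ℝ) × (Fin 4 → ℝ)) : (ℝ × ℝ) × (Fin 4 → ℝ) :=
  planeCoords (x.1 + x.2) (x.1 - x.2)

/-- The inverse of `planeChart`. -/
noncomputable def planeChartInv (q : (ℝ × ℝ) × (Fin 4 → ℝ)) : (Fin 4 → ℝ) × (Fin 4 → ℝ) :=
  (subMin fun i => (planeSum q i + planeDiff q i) / 2,
    subMin fun i => (planeSum q i - planeDiff q i) / 2)

@[fun_prop]
theorem continuous_planeChart : Continuous planeChart := by
  unfold planeChart planeCoords
  fun_prop

@[fun_prop]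
theorem continuous_planeChartInv : Continuous planeChartInv := by
  unfold planeChartInv planeSum planeDiff
  fun_prop

theorem planeChart_planeChartInv (q : (ℝ × ℝ) × (Fin 4 → ℝ)) :
    planeChart (planeChartInv q) = q := by
  refine Eq.trans ?_ (planeCoords_planeSum_planeDiff q)
  set a := Finset.univ.inf' Finset.univ_nonempty fun i => (planeSum q i + planeDiff q i) / 2
  set b := Finset.univ.inf' Finset.univ_nonempty fun i => (planeSum q i - planeDiff q i) / 2
  rw [← planeCoords_sub_const _ _ (a + b) (a - b)]
  rw [planeChart]
  congr 1 <;> ext i <;> simp only [planeChartInv, subMin, Pi.add_apply, Pi.sub_apply, a, b] <;> ring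

theorem planeChartInv_planeChart {x : (Fin 4 → ℝ) × (Fin 4 → ℝ)}
    (h1 : x.1 ∈ orthantBoundary (Fin 4)) (h2 : x.2 ∈ orthantBoundary (Fin 4)) :
    planeChartInv (planeChart x) = x := by
  set m := max ((x.1 + x.2) 2) ((x.1 + x.2) 3)
  set d := (x.1 - x.2) 3
  refine Prod.ext (subMin_eq (c := -(m + d) / 2) h1 fun i => ?_)
    (subMin_eq (c := -(m - d) / 2) h2 fun i => ?_) <;>
  · rw [planeChart, planeSum_planeCoords, planeDiff_planeCoords]
    simp only [Pi.add_apply, Pi.sub_apply, m, d]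
    ring

theorem planeChart_smul_facetCentre (p : Fin 4) {t : ℝ} (ht : 0 ≤ t) :
    planeChart (t • facetCentre p) =
      (![(-(2 * t), 0), (2 * t, 0), (0, -(2 * t)), (0, 2 * t)] p, 0) := by
  have ht' : 0 ≤ t + t := add_nonneg ht ht
  fin_cases p <;> ext i <;> try fin_cases i
  all_goals simp [planeChart, planeCoords, facetCentre, ht', two_mul]

theorem smul_facetCentre_mem_orthantBoundary (p : Fin 4) {t : ℝ} (ht : 0 ≤ t) :
    t • (1 - Pi.single p 1) ∈ orthantBoundary (Fin 4) :=
  ⟨smul_nonneg ht (facetCentre_nonneg p).1, p, by simp⟩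

theorem exists_eq_smul_facetCentre {x : (Fin 4 → ℝ) × (Fin 4 → ℝ)}
    (h1 : x.1 ∈ orthantBoundary (Fin 4)) (h2 : x.2 ∈ orthantBoundary (Fin 4))
    (hy : (planeChart x).2 = 0) (haxis : (planeChart x).1.1 = 0 ∨ (planeChart x).1.2 = 0) :
    ∃ p, ∃ t : ℝ, x = t • facetCentre p := by
  suffices h : ∃ p, ∃ t : ℝ, 0 ≤ t ∧ planeChart x = planeChart (t • facetCentre p) by
    obtain ⟨p, t, ht, h⟩ := h
    refine ⟨p, t, ?_⟩
    have hmem := smul_facetCentre_mem_orthantBoundary p ht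
    rw [← planeChartInv_planeChart h1 h2, h, planeChartInv_planeChart hmem hmem]
  have of_eq {p : Fin 4} {t : ℝ} (ht : 0 ≤ t) (h : (planeChart x).1 =
      ![(-(2 * t), 0), (2 * t, 0), (0, -(2 * t)), (0, 2 * t)] p) :
      ∃ p, ∃ t : ℝ, 0 ≤ t ∧ planeChart x = planeChart (t • facetCentre p) :=
    ⟨p, t, ht, by rw [planeChart_smul_facetCentre p ht]; exact Prod.ext h hy⟩
  rcases haxis with h0 | h0
  · rcases le_total (planeChart x).1.2 0 with h | h
    · exact of_eq (p := 2) (t := -(planeChart x).1.2 / 2) (by linarith)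
        (Prod.ext h0 (by change _ = -(2 * _); ring))
    · exact of_eq (p := 3) (t := (planeChart x).1.2 / 2) (by linarith)
        (Prod.ext h0 (by change _ = 2 * _; ring))
  · rcases le_total (planeChart x).1.1 0 with h | h
    · exact of_eq (p := 0) (t := -(planeChart x).1.1 / 2) (by linarith)
        (Prod.ext (by change _ = -(2 * _); ring) h0)
    · exact of_eq (p := 1) (t := (planeChart x).1.1 / 2) (by linarith)
        (Prod.ext (by change _ = 2 * _; ring) h0)

theorem planeChart_mem_sectorSpace_iff {x : (Fin 4 → ℝ) × (Fin 4 → ℝ)}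
    (h1 : x.1 ∈ orthantBoundary (Fin 4)) (h2 : x.2 ∈ orthantBoundary (Fin 4)) :
    planeChart x ∈ quadrants.sectorSpace 4 ↔ x ∈ centreRayComplement (Fin 4) := by
  constructor
  · intro h
    refine ⟨h1, h2, ?_⟩
    rintro p t rfl
    obtain ⟨i, hi⟩ := exists_ne p
    have ht : 0 ≤ t := by simpa [facetCentre, hi] using h1.1 i
    rw [planeChart_smul_facetCentre p ht] at h
    have haxis := exists_mem_quadrants_iff.1 (h rfl)
    fin_cases p <;> simp at haxis
  · rintro ⟨-, -, hray⟩ hy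
    rw [exists_mem_quadrants_iff, ← not_or]
    intro haxis
    obtain ⟨p, t, h⟩ := exists_eq_smul_facetCentre h1 h2 hy haxis
    exact hray p t h

/-- The homeomorphism given by `planeChart`. -/
noncomputable def planeHomeomorph : centreRayComplement (Fin 4) ≃ₜ quadrants.sectorSpace 4 where
  toFun x := ⟨planeChart x, (planeChart_mem_sectorSpace_iff x.2.1 x.2.2.1).2 x.2⟩
  invFun q := ⟨planeChartInv q, by
    rw [← planeChart_mem_sectorSpace_iff (subMin_mem_orthantBoundary _)
      (subMin_mem_orthantBoundary _), planeChart_planeChartInv]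
    exact q.2⟩
  left_inv x := Subtype.ext (planeChartInv_planeChart x.2.1 x.2.2.1)
  right_inv q := Subtype.ext (planeChart_planeChartInv q)
  continuous_toFun := by fun_prop
  continuous_invFun := by fun_prop

end Chart

section Theta

theorem mem_geomReal_thetaComplex_iff {V : Type*} [Fintype V] {H : Set (Set V)} {f : V → ℝ} :
    f ∈ geomReal (thetaComplex H) ↔
      (∀ v, 0 ≤ f v) ∧ ∑ v, f v = 1 ∧ ∃ h ∈ H, ∀ v ∈ h, f v = 0 := by
  constructor
  · rintro ⟨hf, σ, ⟨-, h, hH, hσ⟩, hsupp, hsum⟩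
    refine ⟨hf, ?_, h, hH, fun v hv => ?_⟩
    · rw [← hsum]
      exact (Finset.sum_subset (Finset.subset_univ σ) fun v _ hv =>
        not_not.1 (mt (hsupp v) hv)).symm
    · exact not_not.1 fun hne => hσ v (hsupp v hne) hv
  · rintro ⟨hf, hsum, h, hH, hzero⟩
    classical
    refine ⟨hf, Finset.univ.filter (f · ≠ 0), ⟨?_, h, hH, fun v hv hvh => ?_⟩, by simp, ?_⟩
    · refine Finset.nonempty_of_sum_ne_zero (f := f) ?_
      rw [Finset.sum_filter_ne_zero, hsum]
      exact one_ne_zero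
    · exact (Finset.mem_filter.1 hv).2 (hzero v hvh)
    · rw [Finset.sum_filter_ne_zero, hsum]

/-- The vertices of the `3`-cube with an even number of ones. -/
def evenVertex (i : Fin 4) : Fin 3 → Bool :=
  ![i.val.testBit 0, i.val.testBit 1, i.val.testBit 0 ^^ i.val.testBit 1]

/-- The antipode of `evenVertex i`. -/
def oddVertex (i : Fin 4) : Fin 3 → Bool := fun l => !evenVertex i l

theorem bijective_evenVertex_oddVertex :
    Function.Bijective (Sum.elim evenVertex oddVertex) := by
  decide

theorem cubeEdges_three_one :
    cubeEdges 3 1 = {e | ∃ i j, i ≠ j ∧ e = {evenVertex i, oddVertex j}} := by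
  have edge_vertices : ∀ (s : Finset (Fin 3)) (g : Fin 3 → Bool), s.card = 3 - 1 →
      ∃ i j, i ≠ j ∧ ∀ v : Fin 3 → Bool,
        (∀ l ∈ s, v l = g l) ↔ v = evenVertex i ∨ v = oddVertex j := by
    decide
  have exists_edge : ∀ i j : Fin 4, i ≠ j → ∃ (s : Finset (Fin 3)) (g : Fin 3 → Bool),
      s.card = 3 - 1 ∧ ∀ v : Fin 3 → Bool,
        v = evenVertex i ∨ v = oddVertex j ↔ ∀ l ∈ s, v l = g l := by
    decide
  ext e
  constructor
  · rintro ⟨s, g, hs, rfl⟩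
    obtain ⟨i, j, hij, h⟩ := edge_vertices s g hs
    exact ⟨i, j, hij, Set.ext h⟩
  · rintro ⟨i, j, hij, rfl⟩
    obtain ⟨s, g, hs, h⟩ := exists_edge i j hij
    exact ⟨s, g, hs, Set.ext h⟩

/-- A function on the vertices of the cube as a pair of functions on the antipodal pairs. -/
noncomputable def evenOddHomeomorph :
    ((Fin 3 → Bool) → ℝ) ≃ₜ (Fin 4 → ℝ) × (Fin 4 → ℝ) :=
  (Homeomorph.piCongrLeft (Y := fun _ => ℝ)
    (Equiv.ofBijective _ bijective_evenVertex_oddVertex)).symm.trans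
    Homeomorph.sumArrowHomeomorphProdArrow

theorem mem_theta_cube_iff {f : (Fin 3 → Bool) → ℝ} :
    f ∈ geomReal (thetaComplex (cubeEdges 3 1)) ↔ evenOddHomeomorph f ∈ offDiagJoin (Fin 4) := by
  have hsum : ∑ v, f v = mass (evenOddHomeomorph f) := by
    rw [← bijective_evenVertex_oddVertex.sum_comp, Fintype.sum_sum_type]
    rfl
  have hnonneg : (∀ v, 0 ≤ f v) ↔ 0 ≤ evenOddHomeomorph f := by
    rw [bijective_evenVertex_oddVertex.surjective.forall, Sum.forall]
    rfl
  rw [mem_geomReal_thetaComplex_iff, cubeEdges_three_one, hsum, hnonneg]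
  refine and_congr_right' (and_congr_right' ⟨?_, ?_⟩)
  · rintro ⟨_, ⟨i, j, hij, rfl⟩, h⟩
    exact ⟨i, j, hij, h _ (by simp), h _ (by simp)⟩
  · rintro ⟨i, j, hij, hi, hj⟩
    exact ⟨_, ⟨i, j, hij, rfl⟩, by rintro v (rfl | rfl) <;> assumption⟩

/-- The complex `Θ(Cube(3,1))` as a union of facets of the join of two tetrahedron boundaries. -/
noncomputable def thetaCubeHomeomorph :
    geomReal (thetaComplex (cubeEdges 3 1)) ≃ₜ offDiagJoin (Fin 4) :=
  evenOddHomeomorph.subtype fun _ => mem_theta_cube_iff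

end Theta

end ThetaCube

/-- `Θ(Cube(3,1))` is homotopy equivalent to a wedge of three
copies of the 4-sphere (the unit sphere in `ℝ⁵`). -/
theorem theta_cube_3_1 :
    Nonempty (ContinuousMap.HomotopyEquiv
      (↥(geomReal (thetaComplex (cubeEdges 3 1))))
      (Wedge (Fin 3) (↥(sphereSpace 5)) (spherePt 5 (by norm_num)))) := by
  refine ⟨ContinuousMap.HomotopyEquiv.trans (Y := ThetaCube.offDiagJoin (Fin 4)) ?_ <|
    ContinuousMap.HomotopyEquiv.trans (Y := ThetaCube.centreRayComplement (Fin 4)) ?_ <|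
    ContinuousMap.HomotopyEquiv.trans (Y := ThetaCube.quadrants.sectorSpace 4) ?_ ?_⟩
  · exact ThetaCube.thetaCubeHomeomorph.toHomotopyEquiv
  · exact ThetaCube.offDiagJoinHomotopyEquiv
  · exact ThetaCube.planeHomeomorph.toHomotopyEquiv
  · exact ThetaCube.quadrants.homotopyEquivWedge
end
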